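/- arXiv:1810.06189 — 2 statements merged into one kernel-verified Lean document; each statement's English description precedes it below -/
import Mathlib

section
/- There exist universal constants C₁, C₂, C₃, C₄, C₅ > 0 with the following property. Let n ≥ 5, let r ∈ [C₂√n, n], and let N ≥ n be an integer with C₁·n·log(Nr/(n√n)) ≤ N ≤ n^{10}. Let θ₁, …, θ_N be independent random vectors uniformly distributed on S^{n−1}. Then there exists q ≥ 1 − C₅√n/r such that with probability at least 1 − e^{−5n}, for every ξ ∈ S^{n−1} and every t ∈ ℝ, (1/N)·Σ_{k=1}^N φ(r⟨ξ, θ_k⟩ + t) ≤ C₃·√(n·log(Nr/(n√n))/N) + (1 + C₄√n/r) · (√n/r) · φ(q·√n·t/r). -/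
open MeasureTheory Metric Set
open scoped RealInnerProductSpace

/-- The uniform (rotation-invariant) probability measure on the unit sphere of `ℝⁿ`. -/
noncomputable def uniformSphere (n : ℕ) :
    Measure (sphere (0 : EuclideanSpace ℝ (Fin n)) 1) :=
  (((volume : Measure (EuclideanSpace ℝ (Fin n))).toSphere) Set.univ)⁻¹ •
    (volume : Measure (EuclideanSpace ℝ (Fin n))).toSphere

/-- `φ(r) = e^{−r²/2}`. -/
noncomputable def gphi (r : ℝ) : ℝ := Real.exp (-r ^ 2 / 2)

/-- `F(η,t) = (1/N) ∑_{k=1}^N φ(r⟨η,θ_k⟩ + t)`. -/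
noncomputable def Ffun {n N : ℕ} (r t : ℝ)
    (θ : Fin N → sphere (0 : EuclideanSpace ℝ (Fin n)) 1)
    (η : EuclideanSpace ℝ (Fin n)) : ℝ :=
  (1 / (N : ℝ)) * ∑ k : Fin N, gphi (r * ⟪η, (θ k : EuclideanSpace ℝ (Fin n))⟫ + t)

/-- The joint law of `N` independent uniform random points on `S^{n-1}`. -/
noncomputable def sphereProduct (n N : ℕ) :
    Measure (Fin N → sphere (0 : EuclideanSpace ℝ (Fin n)) 1) :=
  Measure.pi fun _ => uniformSphere n

/-!
Write `x ∈ ℝⁿ` as `s ξ + y` with `y ⟂ ξ` and scale out `|y|`: this identifies the marginal of the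
uniform measure on the sphere in the direction `ξ` as the density proportional to
`(1-u²)^((n-3)/2)`, and this density is dominated by a multiple of `exp (-(n-3) u² / 2)`. Completing
the square in the resulting Gaussian integral bounds the mean of `F(ξ, t)` by
`(√n / r) φ(q √n t / r)`, and Hoeffding's inequality makes `F` exceed this bound by at most
`ε ~ √(n log(Nr / (n√n)) / N)`, with exponentially high probability, for all pairs of a direction
in a net of the sphere and a shift in a grid. Moving from the net to an arbitrary `ξ` costs
`(r / N) ∑ |⟨ξ - x, θ_k⟩|`, which Cauchy–Schwarz controls by the quadratic form `∑ ⟨·, θ_k⟩²`; the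
same net bounds that form, because `n ⟨x, θ_k⟩² / 10` is exponentially integrable. A net of mesh
`n√n / (Nr)` is fine enough for this cost to be of order `n / N ≤ ε`, and coarse enough for the
union bound. Shifts outside the grid are harmless, as `|r ⟨ξ, θ_k⟩| ≤ r`.
-/

section Gaussian

lemma gphi_nonneg (x : ℝ) : 0 ≤ gphi x := (Real.exp_pos _).le

lemma gphi_le_one (x : ℝ) : gphi x ≤ 1 :=
  Real.exp_le_one_iff.2 (by linarith [sq_nonneg x])

@[fun_prop]
lemma measurable_gphi : Measurable gphi := by
  unfold gphi
  fun_prop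

lemma hasDerivAt_gphi (x : ℝ) : HasDerivAt gphi (-x * gphi x) x := by
  refine ((hasDerivAt_pow 2 x).fun_neg.div_const 2).exp.congr_deriv ?_
  rw [gphi]
  ring

lemma abs_mul_gphi_le_one (x : ℝ) : |x| * gphi x ≤ 1 := by
  rw [gphi, neg_div, Real.exp_neg, ← div_eq_mul_inv, div_le_one (Real.exp_pos _)]
  nlinarith [Real.add_one_le_exp (x ^ 2 / 2), sq_nonneg (|x| - 1), sq_abs x]

lemma gphi_le_add_abs_sub (x y : ℝ) : gphi x ≤ gphi y + |x - y| := by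
  have hderiv (z : ℝ) : ‖-z * gphi z‖ ≤ 1 := by
    rw [norm_mul, norm_neg, Real.norm_eq_abs, Real.norm_of_nonneg (gphi_nonneg z)]
    exact abs_mul_gphi_le_one z
  have hlip := convex_univ.norm_image_sub_le_of_norm_hasDerivWithin_le
    (fun z _ ↦ (hasDerivAt_gphi z).hasDerivWithinAt) (fun z _ ↦ hderiv z) (mem_univ y) (mem_univ x)
  rw [one_mul, Real.norm_eq_abs, Real.norm_eq_abs] at hlip
  linarith [le_abs_self (gphi x - gphi y)]

lemma mul_gphi_mul_le_add_abs_sub {a c : ℝ} (ha0 : 0 ≤ a) (ha1 : a ≤ 1) (hc : |c| ≤ 1)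
    (s t : ℝ) :
    a * gphi (c * s) ≤ a * gphi (c * t) + |s - t| := by
  have hlip := gphi_le_add_abs_sub (c * s) (c * t)
  rw [← mul_sub, abs_mul] at hlip
  nlinarith [mul_le_mul_of_nonneg_left hlip ha0, mul_le_one₀ ha1 (abs_nonneg c) hc,
    abs_nonneg (s - t)]

lemma gphi_le_inv {a x : ℝ} (ha : 0 < a) (hax : a ≤ |x|) : gphi x ≤ a⁻¹ := by
  rw [← one_div, le_div_iff₀' ha]
  exact (mul_le_mul_of_nonneg_right hax (gphi_nonneg x)).trans (abs_mul_gphi_le_one x)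

end Gaussian

section Scaling

variable {E : Type*} [NormedAddCommGroup E] [NormedSpace ℝ E] [FiniteDimensional ℝ E]
  [MeasurableSpace E] [BorelSpace E] (μ : Measure E) [μ.IsAddHaarMeasure]

lemma lintegral_normalize_mul_norm [Nontrivial E] {h : E → ENNReal} (hh : Measurable h)
    {w : ℝ → ENNReal} (hw : Measurable w) :
    ∫⁻ x, h (‖x‖⁻¹ • x) * w ‖x‖ ∂μ =
      (∫⁻ θ, h θ ∂μ.toSphere) *
        ∫⁻ ρ, w ρ ∂Measure.volumeIoiPow (Module.finrank ℝ E - 1) := by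
  have hcompl : MeasurableSet ({0}ᶜ : Set E) := (measurableSet_singleton _).compl
  calc ∫⁻ x, h (‖x‖⁻¹ • x) * w ‖x‖ ∂μ
      = ∫⁻ x : ({0}ᶜ : Set E), h (‖(x : E)‖⁻¹ • x) * w ‖(x : E)‖
          ∂Measure.comap Subtype.val μ := by
        rw [lintegral_subtype_comap hcompl (fun x ↦ h (‖x‖⁻¹ • x) * w ‖x‖),
          restrict_compl_singleton]
    _ = ∫⁻ p, h p.1 * w p.2
          ∂(μ.toSphere.prod (Measure.volumeIoiPow (Module.finrank ℝ E - 1))) := by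
        rw [← μ.measurePreserving_homeomorphUnitSphereProd.lintegral_comp (by fun_prop)]
        simp only [homeomorphUnitSphereProd_apply_fst_coe,
          homeomorphUnitSphereProd_apply_snd_coe]
    _ = _ := lintegral_prod_mul (f := fun θ : sphere (0 : E) 1 ↦ h θ)
          (g := fun ρ : Ioi (0 : ℝ) ↦ w ρ) (by fun_prop) (by fun_prop)

lemma ofReal_pow_mul_lintegral_comp_smul {c : ℝ} (hc : 0 < c) {Φ : E → ENNReal}
    (hΦ : Measurable Φ) :
    ENNReal.ofReal (c ^ Module.finrank ℝ E) * ∫⁻ y, Φ (c • y) ∂μ = ∫⁻ y, Φ y ∂μ := by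
  rw [← lintegral_map hΦ (measurable_const_smul c), Measure.map_addHaar_smul μ hc.ne',
    lintegral_smul_measure, smul_eq_mul, ← mul_assoc, abs_of_pos (by positivity),
    ← ENNReal.ofReal_mul (by positivity), mul_inv_cancel₀ (by positivity), ENNReal.ofReal_one,
    one_mul]

lemma lintegral_norm_mul_comp_mul_norm {c : ℝ} (hc : 0 < c) {w : ℝ → ENNReal}
    (hw : Measurable w) :
    ∫⁻ y, ENNReal.ofReal ‖y‖ * w (c * ‖y‖) ∂μ =
      ENNReal.ofReal (c⁻¹ ^ (Module.finrank ℝ E + 1)) *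
        ∫⁻ y, ENNReal.ofReal ‖y‖ * w ‖y‖ ∂μ := by
  rw [← ofReal_pow_mul_lintegral_comp_smul μ hc
      (Φ := fun y ↦ ENNReal.ofReal ‖y‖ * w ‖y‖) (by fun_prop),
    ← mul_assoc, ← ENNReal.ofReal_mul (by positivity), ← lintegral_const_mul _ (by fun_prop)]
  refine lintegral_congr fun y ↦ ?_
  rw [norm_smul, Real.norm_of_nonneg hc.le, ← mul_assoc, ← ENNReal.ofReal_mul (by positivity)]
  congr 2
  rw [pow_succ, inv_pow]
  field_simp

lemma lintegral_sqrt_sq_add_sq {f w : ℝ → ENNReal} (hf : Measurable f) (hw : Measurable w)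
    {a : ℝ} (ha : 0 < a) :
    ∫⁻ s : ℝ, f ((√(s ^ 2 + a ^ 2))⁻¹ * s) * w √(s ^ 2 + a ^ 2) =
      ∫⁻ x : ℝ, f ((√(1 + x ^ 2))⁻¹ * x) * (ENNReal.ofReal a * w (√(1 + x ^ 2) * a)) := by
  rw [← ofReal_pow_mul_lintegral_comp_smul volume ha (by fun_prop), Module.finrank_self, pow_one,
    ← lintegral_const_mul _ (by fun_prop)]
  refine lintegral_congr fun x ↦ ?_
  have hroot : √((a • x) ^ 2 + a ^ 2) = √(1 + x ^ 2) * a := by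
    rw [← Real.sqrt_sq ha.le, ← Real.sqrt_mul (by positivity), Real.sqrt_sq ha.le, smul_eq_mul]
    ring_nf
  have hratio : (√(1 + x ^ 2) * a)⁻¹ * (a • x) = (√(1 + x ^ 2))⁻¹ * x := by
    rw [smul_eq_mul]
    field_simp
  rw [hroot, hratio, mul_left_comm]

end Scaling

section ProjectiveCoordinate

lemma hasDerivAt_inv_sqrt_one_sub_sq_mul {u : ℝ} (hu : u ∈ Ioo (-1) 1) :
    HasDerivAt (fun u : ℝ ↦ (√(1 - u ^ 2))⁻¹ * u) ((√(1 - u ^ 2))⁻¹ ^ 3) u := by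
  have hpos : 0 < 1 - u ^ 2 := by nlinarith [hu.1, hu.2]
  have hsq : √(1 - u ^ 2) ^ 2 = 1 - u ^ 2 := Real.sq_sqrt hpos.le
  refine ((((hasDerivAt_pow 2 u).const_sub 1).sqrt hpos.ne').inv
    (Real.sqrt_pos.2 hpos).ne' |>.mul (hasDerivAt_id u)).congr_deriv ?_
  simp only [id, Pi.inv_apply]
  field_simp
  rw [hsq]
  push_cast
  ring

lemma lintegral_eq_lintegral_Ioo (H : ℝ → ENNReal) :
    ∫⁻ x, H x = ∫⁻ u in Ioo (-1 : ℝ) 1,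
      ENNReal.ofReal ((√(1 - u ^ 2))⁻¹ ^ 3) * H ((√(1 - u ^ 2))⁻¹ * u) := by
  let e := (OpenPartialHomeomorph.univUnitBall (E := ℝ)).symm
  have he : (e : ℝ → ℝ) = fun u ↦ (√(1 - u ^ 2))⁻¹ * u := by
    ext u
    simp [e, OpenPartialHomeomorph.univUnitBall_symm_apply]
  have hsource : e.source = Ioo (-1) 1 := by
    simp [e, OpenPartialHomeomorph.univUnitBall, Real.ball_eq_Ioo]
  have himage : (fun u : ℝ ↦ (√(1 - u ^ 2))⁻¹ * u) '' Ioo (-1) 1 = univ := by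
    rw [← he, ← hsource, e.image_source_eq_target]
    rfl
  have hinj : InjOn (fun u : ℝ ↦ (√(1 - u ^ 2))⁻¹ * u) (Ioo (-1) 1) := he ▸ hsource ▸ e.injOn
  rw [← setLIntegral_univ, ← himage, lintegral_image_eq_lintegral_abs_deriv_mul measurableSet_Ioo
    (fun u hu ↦ (hasDerivAt_inv_sqrt_one_sub_sq_mul hu).hasDerivWithinAt) hinj]
  refine lintegral_congr fun u ↦ ?_
  rw [abs_of_nonneg (by positivity)]

lemma sqrt_one_add_inv_sqrt_one_sub_sq_mul_sq {u : ℝ} (hu : u ∈ Ioo (-1) 1) :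
    √(1 + ((√(1 - u ^ 2))⁻¹ * u) ^ 2) = (√(1 - u ^ 2))⁻¹ := by
  have hpos : 0 < 1 - u ^ 2 := by nlinarith [hu.1, hu.2]
  rw [← Real.sqrt_inv, mul_pow, Real.sq_sqrt (inv_nonneg.2 hpos.le)]
  congr 1
  field_simp
  ring

end ProjectiveCoordinate

section Slicing

variable {E : Type*} [NormedAddCommGroup E] [InnerProductSpace ℝ E]

lemma inner_smul_add_orthogonal {ξ : E} (hξ : ‖ξ‖ = 1) (s : ℝ) (y : (ℝ ∙ ξ)ᗮ) :
    ⟪ξ, s • ξ + (y : E)⟫ = s := by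
  rw [inner_add_right, real_inner_smul_right, real_inner_self_eq_norm_sq, hξ,
    Submodule.mem_orthogonal_singleton_iff_inner_right.1 y.2, one_pow, mul_one, add_zero]

lemma norm_smul_add_orthogonal {ξ : E} (hξ : ‖ξ‖ = 1) (s : ℝ) (y : (ℝ ∙ ξ)ᗮ) :
    ‖s • ξ + (y : E)‖ = √(s ^ 2 + ‖y‖ ^ 2) := by
  have horth : ⟪s • ξ, (y : E)⟫ = 0 := by
    rw [real_inner_smul_left, Submodule.mem_orthogonal_singleton_iff_inner_right.1 y.2, mul_zero]
  rw [norm_add_eq_sqrt_iff_real_inner_eq_zero.2 horth, norm_smul, hξ, mul_one,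
    Real.norm_eq_abs, abs_mul_abs_self, ← pow_two, ← pow_two, Submodule.coe_norm]

variable [FiniteDimensional ℝ E]

lemma finrank_orthogonal_span_singleton_add_one {ξ : E} (hξ : ξ ≠ 0) :
    Module.finrank ℝ (ℝ ∙ ξ)ᗮ + 1 = Module.finrank ℝ E := by
  rw [← (ℝ ∙ ξ).finrank_add_finrank_orthogonal, finrank_span_singleton hξ, add_comm]

variable [MeasurableSpace E] [BorelSpace E]

lemma measurePreserving_smul_add_orthogonal {ξ : E} (hξ : ‖ξ‖ = 1) :
    MeasurePreserving (fun p : ℝ × (ℝ ∙ ξ)ᗮ ↦ p.1 • ξ + (p.2 : E)) := by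
  have line : MeasurePreserving (fun p : ℝ × (ℝ ∙ ξ)ᗮ ↦
      (LinearIsometryEquiv.toSpanUnitSingleton ξ hξ p.1, p.2)) :=
    (LinearIsometryEquiv.measurePreserving _).prod (MeasurePreserving.id _)
  have sum := ((ℝ ∙ ξ).orthogonalDecomposition.symm.measurePreserving.comp
    (WithLp.volume_preserving_toLp _ _)).comp line
  convert sum using 1
  ext p
  simp

lemma lintegral_inner_norm {ξ : E} (hξ : ‖ξ‖ = 1) {F : ℝ → ℝ → ENNReal}
    (hF : Measurable (Function.uncurry F)) :
    ∫⁻ x : E, F ⟪ξ, x⟫ ‖x‖ =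
      ∫⁻ y : (ℝ ∙ ξ)ᗮ, ∫⁻ s : ℝ, F s √(s ^ 2 + ‖y‖ ^ 2) := by
  rw [← (measurePreserving_smul_add_orthogonal hξ).lintegral_comp (by fun_prop),
    Measure.volume_eq_prod, lintegral_prod_symm' _ (by fun_prop)]
  simp only [inner_smul_add_orthogonal hξ, norm_smul_add_orthogonal hξ]

lemma lintegral_inner_normalize_mul_norm {ξ : E} (hξ : ‖ξ‖ = 1) (hE : 2 ≤ Module.finrank ℝ E)
    {f w : ℝ → ENNReal} (hf : Measurable f) (hw : Measurable w) :
    ∫⁻ x : E, f ⟪ξ, ‖x‖⁻¹ • x⟫ * w ‖x‖ =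
      (∫⁻ y : (ℝ ∙ ξ)ᗮ, ENNReal.ofReal ‖y‖ * w ‖y‖) *
        ∫⁻ x : ℝ, f ((√(1 + x ^ 2))⁻¹ * x) *
          ENNReal.ofReal ((√(1 + x ^ 2))⁻¹ ^ Module.finrank ℝ E) := by
  have hdim : Module.finrank ℝ (ℝ ∙ ξ)ᗮ + 1 = Module.finrank ℝ E :=
    finrank_orthogonal_span_singleton_add_one (norm_ne_zero_iff.1 (hξ ▸ one_ne_zero))
  have : Nontrivial (ℝ ∙ ξ)ᗮ := Module.nontrivial_of_finrank_pos (R := ℝ) (by lia)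
  have stretch : ∀ᵐ y : (ℝ ∙ ξ)ᗮ,
      ∫⁻ s : ℝ, f ((√(s ^ 2 + ‖y‖ ^ 2))⁻¹ * s) * w √(s ^ 2 + ‖y‖ ^ 2) =
        ∫⁻ x : ℝ, f ((√(1 + x ^ 2))⁻¹ * x) *
          (ENNReal.ofReal ‖y‖ * w (√(1 + x ^ 2) * ‖y‖)) := by
    filter_upwards [Measure.ae_ne volume 0] with y hy
    exact lintegral_sqrt_sq_add_sq hf hw (norm_pos_iff.2 hy)
  simp only [real_inner_smul_right]
  rw [lintegral_inner_norm hξ (F := fun s ρ ↦ f (ρ⁻¹ * s) * w ρ) (by fun_prop),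
    lintegral_congr_ae stretch, lintegral_lintegral_swap (by fun_prop), mul_comm,
    ← lintegral_mul_const _ (by fun_prop)]
  refine lintegral_congr fun x ↦ ?_
  rw [lintegral_const_mul _ (by fun_prop),
    lintegral_norm_mul_comp_mul_norm volume (by positivity) hw, hdim, mul_assoc]

lemma lintegral_inner_normalize_mul_norm_eq_Ioo {ξ : E} (hξ : ‖ξ‖ = 1)
    (hE : 3 ≤ Module.finrank ℝ E)
    {f w : ℝ → ENNReal} (hf : Measurable f) (hw : Measurable w) :
    ∫⁻ x : E, f ⟪ξ, ‖x‖⁻¹ • x⟫ * w ‖x‖ =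
      (∫⁻ y : (ℝ ∙ ξ)ᗮ, ENNReal.ofReal ‖y‖ * w ‖y‖) *
        ∫⁻ u in Ioo (-1 : ℝ) 1, f u *
          ENNReal.ofReal (√(1 - u ^ 2) ^ (Module.finrank ℝ E - 3)) := by
  rw [lintegral_inner_normalize_mul_norm hξ (by lia) hf hw, lintegral_eq_lintegral_Ioo]
  congr 1
  refine setLIntegral_congr_fun measurableSet_Ioo fun u hu ↦ ?_
  have hs : 0 < √(1 - u ^ 2) := Real.sqrt_pos.2 (by nlinarith [hu.1, hu.2])
  obtain ⟨k, hk⟩ := Nat.exists_eq_add_of_le hE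
  simp only [sqrt_one_add_inv_sqrt_one_sub_sq_mul_sq hu, inv_inv, hk, Nat.add_sub_cancel_left]
  rw [mul_inv_cancel_left₀ hs.ne', mul_left_comm, ← ENNReal.ofReal_mul (by positivity), pow_add,
    ← mul_assoc, ← mul_pow, inv_mul_cancel₀ hs.ne', one_pow, one_mul]

lemma lintegral_toSphere_inner_mul {ξ : E} (hξ : ‖ξ‖ = 1)
    (hE : 3 ≤ Module.finrank ℝ E) {f : ℝ → ENNReal} (hf : Measurable f) :
    (∫⁻ θ, f ⟪ξ, (θ : E)⟫ ∂(volume : Measure E).toSphere) *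
        ∫⁻ u in Ioo (-1 : ℝ) 1, ENNReal.ofReal (√(1 - u ^ 2) ^ (Module.finrank ℝ E - 3)) =
      (volume : Measure E).toSphere univ *
        ∫⁻ u in Ioo (-1 : ℝ) 1, f u *
          ENNReal.ofReal (√(1 - u ^ 2) ^ (Module.finrank ℝ E - 3)) := by
  have : Nontrivial E := Module.nontrivial_of_finrank_pos (R := ℝ) (by lia)
  -- Any radial weight of positive finite mass would do.
  let w : ℝ → ENNReal := (Iio 1).indicator 1
  have hw : Measurable w := measurable_one.indicator measurableSet_Iio
  set d := Module.finrank ℝ E - 1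
  set W := ∫⁻ ρ, w ρ ∂Measure.volumeIoiPow d
  set K := ∫⁻ y : (ℝ ∙ ξ)ᗮ, ENNReal.ofReal ‖y‖ * w ‖y‖
  have polar {g : ℝ → ENNReal} (hg : Measurable g) :
      (∫⁻ θ, g ⟪ξ, (θ : E)⟫ ∂(volume : Measure E).toSphere) * W = K * ∫⁻ u in Ioo (-1 : ℝ) 1,
        g u * ENNReal.ofReal (√(1 - u ^ 2) ^ (Module.finrank ℝ E - 3)) := by
    rw [← lintegral_inner_normalize_mul_norm_eq_Ioo hξ hE hg hw,
      lintegral_normalize_mul_norm volume (h := fun x ↦ g ⟪ξ, x⟫) (by fun_prop) hw]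
  have hone := polar (g := 1) measurable_one
  simp only [Pi.one_apply, one_mul, lintegral_one] at hone
  have hW : W = ENNReal.ofReal (1 ^ (d + 1) / (d + 1)) := by
    rw [← Measure.volumeIoiPow_apply_Iio d ⟨1, mem_Ioi.2 one_pos⟩,
      ← lintegral_indicator_one measurableSet_Iio]
    rfl
  rw [← ENNReal.mul_left_inj (c := W)
    (hW ▸ (ENNReal.ofReal_pos.2 (by positivity)).ne') (hW ▸ ENNReal.ofReal_ne_top)]
  calc _ = ((∫⁻ θ, f ⟪ξ, (θ : E)⟫ ∂(volume : Measure E).toSphere) * W) * ∫⁻ u in Ioo (-1 : ℝ) 1,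
        ENNReal.ofReal (√(1 - u ^ 2) ^ (Module.finrank ℝ E - 3)) := by ring
    _ = (∫⁻ u in Ioo (-1 : ℝ) 1, f u *
          ENNReal.ofReal (√(1 - u ^ 2) ^ (Module.finrank ℝ E - 3))) * (K * ∫⁻ u in Ioo (-1 : ℝ) 1,
        ENNReal.ofReal (√(1 - u ^ 2) ^ (Module.finrank ℝ E - 3))) := by rw [polar hf]; ring
    _ = _ := by rw [← hone]; ring

end Slicing

section Wallis

lemma integral_sin_pow_mul_integral_sin_pow_succ (k : ℕ) :
    (k + 1) * ((∫ x in 0..Real.pi, Real.sin x ^ k) * ∫ x in 0..Real.pi, Real.sin x ^ (k + 1)) =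
      2 * Real.pi := by
  induction k with
  | zero =>
    norm_num [mul_comm]
  | succ k ih =>
    rw [integral_sin_pow k, ← ih]
    simp only [Real.sin_zero, Real.sin_pi]
    push_cast
    field_simp
    ring

lemma integral_sqrt_one_sub_sq_pow (k : ℕ) :
    ∫ u in (-1 : ℝ)..1, √(1 - u ^ 2) ^ k = ∫ x in 0..Real.pi, Real.sin x ^ (k + 1) := by
  have hcos := intervalIntegral.integral_comp_mul_deriv (a := 0) (b := Real.pi)
    (g := fun u ↦ √(1 - u ^ 2) ^ k) (fun x _ ↦ Real.hasDerivAt_cos x) (by fun_prop) (by fun_prop)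
  rw [Real.cos_zero, Real.cos_pi] at hcos
  rw [intervalIntegral.integral_symm, ← hcos, ← intervalIntegral.integral_neg]
  refine intervalIntegral.integral_congr fun x hx ↦ ?_
  rw [uIcc_of_le Real.pi_pos.le] at hx
  have hsin : √(1 - Real.cos x ^ 2) = Real.sin x := by
    rw [← Real.abs_sin_eq_sqrt_one_sub_cos_sq, abs_of_nonneg (Real.sin_nonneg_of_mem_Icc hx)]
  simp only [Function.comp_apply, hsin]
  ring

lemma sqrt_two_pi_div_le_integral_sqrt_one_sub_sq_pow (k : ℕ) :
    √(2 * Real.pi / (k + 2)) ≤ ∫ u in (-1 : ℝ)..1, √(1 - u ^ 2) ^ k := by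
  rw [integral_sqrt_one_sub_sq_pow]
  have hpos : 0 < ∫ x in 0..Real.pi, Real.sin x ^ (k + 1) := integral_sin_pow_pos _
  refine Real.sqrt_le_iff.2 ⟨hpos.le, ?_⟩
  rw [div_le_iff₀' (by positivity), ← integral_sin_pow_mul_integral_sin_pow_succ (k + 1), pow_two]
  push_cast
  rw [add_assoc, one_add_one_eq_two]
  gcongr
  exact integral_sin_pow_succ_le _

lemma lintegral_Ioo_sqrt_one_sub_sq_pow (k : ℕ) :
    ∫⁻ u in Ioo (-1 : ℝ) 1, ENNReal.ofReal (√(1 - u ^ 2) ^ k) =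
      ENNReal.ofReal (∫ u in (-1 : ℝ)..1, √(1 - u ^ 2) ^ k) := by
  have hcont : Continuous fun u : ℝ ↦ √(1 - u ^ 2) ^ k := by fun_prop
  rw [intervalIntegral.integral_of_le (by norm_num), integral_Ioc_eq_integral_Ioo,
    ofReal_integral_eq_lintegral_ofReal (hcont.integrableOn_Icc.mono_set Ioo_subset_Icc_self)
      (.of_forall fun u ↦ by positivity)]

lemma sqrt_one_sub_sq_pow_le_exp (u : ℝ) (k : ℕ) :
    √(1 - u ^ 2) ^ k ≤ Real.exp (-(k * u ^ 2) / 2) := by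
  have hsqrt : √(1 - u ^ 2) ≤ Real.exp (-u ^ 2 / 2) := by
    rw [Real.exp_half]
    exact Real.sqrt_le_sqrt (by linarith [Real.add_one_le_exp (-u ^ 2)])
  calc √(1 - u ^ 2) ^ k ≤ Real.exp (-u ^ 2 / 2) ^ k := by gcongr
    _ = Real.exp (-(k * u ^ 2) / 2) := by
      rw [← Real.exp_nat_mul]
      ring_nf

end Wallis

section UniformSphere

variable {n : ℕ}

instance isProbabilityMeasure_uniformSphere [NeZero n] :
    IsProbabilityMeasure (uniformSphere n) :=
  have : NeZero (volume : Measure (EuclideanSpace ℝ (Fin n))).toSphere :=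
    ⟨Measure.toSphere_ne_zero _⟩
  isProbabilityMeasureSMul

lemma lintegral_uniformSphere_inner_mul (hn : 3 ≤ n) {ξ : EuclideanSpace ℝ (Fin n)} (hξ : ‖ξ‖ = 1)
    {f : ℝ → ENNReal} (hf : Measurable f) :
    (∫⁻ θ, f ⟪ξ, (θ : EuclideanSpace ℝ (Fin n))⟫ ∂uniformSphere n) *
        ∫⁻ u in Ioo (-1 : ℝ) 1, ENNReal.ofReal (√(1 - u ^ 2) ^ (n - 3)) =
      ∫⁻ u in Ioo (-1 : ℝ) 1, f u * ENNReal.ofReal (√(1 - u ^ 2) ^ (n - 3)) := by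
  have : NeZero n := ⟨by lia⟩
  have h := lintegral_toSphere_inner_mul hξ (by simpa using hn) hf
  rw [finrank_euclideanSpace_fin] at h
  have hmass : ((volume : Measure (EuclideanSpace ℝ (Fin n))).toSphere univ)⁻¹ *
      (volume : Measure (EuclideanSpace ℝ (Fin n))).toSphere univ = 1 :=
    measure_univ (μ := uniformSphere n)
  rw [uniformSphere, lintegral_smul_measure, smul_eq_mul, mul_assoc, h, ← mul_assoc, hmass, one_mul]

lemma lintegral_uniformSphere_inner_le (hn : 3 ≤ n) {ξ : EuclideanSpace ℝ (Fin n)} (hξ : ‖ξ‖ = 1)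
    {f : ℝ → ENNReal} (hf : Measurable f) :
    ∫⁻ θ, f ⟪ξ, (θ : EuclideanSpace ℝ (Fin n))⟫ ∂uniformSphere n ≤
      ENNReal.ofReal √((n - 1) / (2 * Real.pi)) *
        ∫⁻ u, f u * ENNReal.ofReal (Real.exp (-((n - 3) * u ^ 2) / 2)) := by
  obtain ⟨k, rfl⟩ := Nat.exists_eq_add_of_le hn
  have hmarginal := lintegral_uniformSphere_inner_mul hn hξ hf
  rw [Nat.add_sub_cancel_left, lintegral_Ioo_sqrt_one_sub_sq_pow] at hmarginal
  have hsub : ((3 + k : ℕ) : ℝ) - 1 = k + 2 ∧ ((3 + k : ℕ) : ℝ) - 3 = k := by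
    push_cast
    constructor <;> ring
  have hnorm : 1 ≤ ENNReal.ofReal √((k + 2) / (2 * Real.pi)) *
      ENNReal.ofReal (∫ u in (-1 : ℝ)..1, √(1 - u ^ 2) ^ k) := by
    rw [← ENNReal.ofReal_mul (by positivity), ENNReal.one_le_ofReal, ← inv_div, Real.sqrt_inv,
      inv_mul_eq_div, one_le_div (by positivity)]
    exact sqrt_two_pi_div_le_integral_sqrt_one_sub_sq_pow k
  rw [hsub.1, hsub.2]
  calc _ ≤ ENNReal.ofReal √((k + 2) / (2 * Real.pi)) *
        ENNReal.ofReal (∫ u in (-1 : ℝ)..1, √(1 - u ^ 2) ^ k) * _ := le_mul_of_one_le_left' hnorm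
    _ = ENNReal.ofReal √((k + 2) / (2 * Real.pi)) *
        ∫⁻ u in Ioo (-1 : ℝ) 1, f u * ENNReal.ofReal (√(1 - u ^ 2) ^ k) := by
      rw [mul_assoc, mul_comm (ENNReal.ofReal (∫ _ in _.._, _)), hmarginal]
    _ ≤ _ := by
      refine mul_le_mul_right
        ((lintegral_mono fun u ↦ ?_).trans (setLIntegral_le_lintegral (Ioo (-1) 1) _)) _
      gcongr
      exact sqrt_one_sub_sq_pow_le_exp u k

lemma lintegral_exp_neg_mul_sq {b : ℝ} (hb : 0 < b) :
    ∫⁻ u : ℝ, ENNReal.ofReal (Real.exp (-b * u ^ 2)) = ENNReal.ofReal √(Real.pi / b) := by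
  rw [← integral_gaussian, ofReal_integral_eq_lintegral_ofReal (integrable_exp_neg_mul_sq hb)
    (.of_forall fun u ↦ (Real.exp_pos _).le)]

lemma lintegral_uniformSphere_exp_inner_sq_le (hn : 5 ≤ n) {ξ : EuclideanSpace ℝ (Fin n)}
    (hξ : ‖ξ‖ = 1) :
    ∫⁻ θ, ENNReal.ofReal (Real.exp (n * ⟪ξ, (θ : EuclideanSpace ℝ (Fin n))⟫ ^ 2 / 10))
      ∂uniformSphere n ≤ ENNReal.ofReal 2 := by
  have hn' : (5 : ℝ) ≤ n := by exact_mod_cast hn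
  have hb : 0 < ((n : ℝ) - 3) / 4 := by linarith
  have hweight (u : ℝ) : ENNReal.ofReal (Real.exp (n * u ^ 2 / 10)) *
      ENNReal.ofReal (Real.exp (-((n - 3) * u ^ 2) / 2)) ≤
        ENNReal.ofReal (Real.exp (-((n - 3) / 4) * u ^ 2)) := by
    rw [← ENNReal.ofReal_mul (by positivity), ← Real.exp_add]
    gcongr
    nlinarith [sq_nonneg u]
  refine (lintegral_uniformSphere_inner_le (by lia) hξ
    (f := fun u ↦ ENNReal.ofReal (Real.exp (n * u ^ 2 / 10))) (by fun_prop)).trans ?_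
  calc _ ≤ ENNReal.ofReal √((n - 1) / (2 * Real.pi)) *
        ∫⁻ u : ℝ, ENNReal.ofReal (Real.exp (-((n - 3) / 4) * u ^ 2)) := by
        gcongr
        exact hweight _
    _ = ENNReal.ofReal √(2 * (n - 1) / (n - 3)) := by
        rw [lintegral_exp_neg_mul_sq hb, ← ENNReal.ofReal_mul (by positivity),
          ← Real.sqrt_mul' _ (by positivity)]
        congr 2
        have : (n : ℝ) - 3 ≠ 0 := by linarith
        field_simp
        norm_num
    _ ≤ ENNReal.ofReal 2 := by
        gcongr
        rw [Real.sqrt_le_left two_pos.le, div_le_iff₀ (by linarith)]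
        linarith

lemma lintegral_gphi_mul_exp {a r : ℝ} (ha : 0 < a + r ^ 2) (t : ℝ) :
    ∫⁻ u, ENNReal.ofReal (gphi (r * u + t)) * ENNReal.ofReal (Real.exp (-(a * u ^ 2) / 2)) =
      ENNReal.ofReal (√(2 * Real.pi / (a + r ^ 2)) *
        Real.exp (-(a / (a + r ^ 2) * t ^ 2) / 2)) := by
  have complete_square (u : ℝ) :
      ENNReal.ofReal (gphi (r * u + t)) * ENNReal.ofReal (Real.exp (-(a * u ^ 2) / 2)) =
        ENNReal.ofReal (Real.exp (-(a / (a + r ^ 2) * t ^ 2) / 2)) *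
          ENNReal.ofReal (Real.exp (-((a + r ^ 2) / 2) * (u + r * t / (a + r ^ 2)) ^ 2)) := by
    rw [gphi, ← ENNReal.ofReal_mul (by positivity), ← Real.exp_add,
      ← ENNReal.ofReal_mul (by positivity), ← Real.exp_add]
    congr 2
    field_simp
    ring
  simp_rw [complete_square]
  rw [lintegral_const_mul _ (by fun_prop), lintegral_add_right_eq_self
    (fun u : ℝ ↦ ENNReal.ofReal (Real.exp (-((a + r ^ 2) / 2) * u ^ 2))),
    lintegral_exp_neg_mul_sq (by positivity), ← ENNReal.ofReal_mul (by positivity), mul_comm,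
    div_div_eq_mul_div, mul_comm Real.pi]

lemma one_sub_sq_mul_div_sq_le {d r : ℝ} (hd : 3 < d) (hr : 4 * √d ≤ r) (hrd : r ≤ d * √d) :
    (1 - 4 * √d / r) ^ 2 * d / r ^ 2 ≤ (d - 3) / (d - 3 + r ^ 2) := by
  have hs : 0 < √d := Real.sqrt_pos.2 (by linarith)
  have hr0 : 0 < r := by linarith
  set a := 4 * √d / r with ha
  have ha0 : 0 ≤ a := by positivity
  have ha1 : a ≤ 1 := (div_le_one hr0).2 hr
  have har : a * r ^ 2 = 4 * √d * r := by rw [ha]; field_simp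
  have hcore : d ^ 2 + 3 * r ^ 2 ≤ a * d * r ^ 2 := by
    have hd2 : d ^ 2 ≤ d * √d * r := by
      nlinarith [Real.sq_sqrt (show 0 ≤ d by linarith), mul_pos (show 0 < d by linarith) hs]
    nlinarith
  calc (1 - a) ^ 2 * d / r ^ 2 ≤ (1 - a) * d / r ^ 2 := by
        gcongr
        nlinarith
    _ ≤ (d - 3) / (d - 3 + r ^ 2) := by
        rw [div_le_div_iff₀ (by positivity) (by nlinarith)]
        nlinarith [mul_nonneg ha0 (mul_pos (show 0 < d by linarith) (sub_pos.2 hd)).le]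

lemma lintegral_uniformSphere_gphi_le (hn : 5 ≤ n) {r : ℝ} (hr : 4 * √n ≤ r) (hrn : r ≤ n * √n)
    {ξ : EuclideanSpace ℝ (Fin n)} (hξ : ‖ξ‖ = 1) (t : ℝ) :
    ∫⁻ θ, ENNReal.ofReal (gphi (r * ⟪ξ, (θ : EuclideanSpace ℝ (Fin n))⟫ + t)) ∂uniformSphere n ≤
      ENNReal.ofReal (√n / r * gphi ((1 - 4 * √n / r) * √n * t / r)) := by
  have hn' : (5 : ℝ) ≤ n := by exact_mod_cast hn
  have hr0 : 0 < r := lt_of_lt_of_le (by positivity) hr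
  have hD : 0 < (n : ℝ) - 3 + r ^ 2 := by nlinarith
  have hn_le : (n : ℝ) ≤ r ^ 2 := by
    nlinarith [Real.sq_sqrt (Nat.cast_nonneg (α := ℝ) n), Real.sqrt_nonneg n]
  refine (lintegral_uniformSphere_inner_le (by lia) hξ
    (f := fun u ↦ ENNReal.ofReal (gphi (r * u + t))) (by fun_prop)).trans ?_
  rw [lintegral_gphi_mul_exp hD, ← ENNReal.ofReal_mul (by positivity), ← mul_assoc]
  gcongr
  · rw [← Real.sqrt_mul' _ (by positivity)]
    refine Real.sqrt_le_iff.2 ⟨by positivity, ?_⟩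
    have hpi := Real.two_pi_pos.ne'
    rw [div_pow, Real.sq_sqrt (by positivity), div_mul_div_comm, mul_comm (2 * Real.pi),
      mul_div_mul_right _ _ hpi, div_le_div_iff₀ hD (by positivity)]
    nlinarith
  · have hsq : ((1 - 4 * √n / r) * √n * t / r) ^ 2 = (1 - 4 * √n / r) ^ 2 * n / r ^ 2 * t ^ 2 := by
      rw [div_pow, mul_pow, mul_pow, Real.sq_sqrt (by positivity)]
      ring
    have hcoef := one_sub_sq_mul_div_sq_le (by linarith) hr hrn
    rw [gphi, hsq]
    gcongr

end UniformSphere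

section Concentration

open ProbabilityTheory

variable {Ω ι : Type*} [MeasurableSpace Ω] [Fintype ι] {μ : Measure Ω} [IsProbabilityMeasure μ]

lemma measure_pi_le_sum_le_exp_of_mem_Icc {X : Ω → ℝ} (hX : Measurable X)
    (hX01 : ∀ ω, X ω ∈ Icc (0 : ℝ) 1) {A : ℝ} (hA : 0 ≤ A)
    (hmean : ∫⁻ ω, ENNReal.ofReal (X ω) ∂μ ≤ ENNReal.ofReal A) {ε : ℝ} (hε : 0 ≤ ε) :
    Measure.pi (fun _ : ι ↦ μ) {ω | Fintype.card ι * (A + ε) ≤ ∑ i, X (ω i)} ≤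
      ENNReal.ofReal (Real.exp (-(2 * Fintype.card ι * ε ^ 2))) := by
  set P := Measure.pi fun _ : ι ↦ μ
  set a := ∫ ω, X ω ∂μ with ha_def
  have ha : a ≤ A := by
    rw [ha_def, integral_eq_lintegral_of_nonneg_ae (.of_forall fun ω ↦ (hX01 ω).1)
      hX.aestronglyMeasurable]
    exact ENNReal.toReal_le_of_le_ofReal hA hmean
  have hindep : iIndepFun (fun i (ω : ι → Ω) ↦ X (ω i) - a) P :=
    iIndepFun_pi (X := fun _ ω ↦ X ω - a) fun _ ↦ (hX.sub_const a).aemeasurable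
  have hsubgaussian (i : ι) :
      HasSubgaussianMGF (fun ω : ι → Ω ↦ X (ω i) - a) ((‖(1 : ℝ) - 0‖₊ / 2) ^ 2) P := by
    have hmp := measurePreserving_eval (fun _ : ι ↦ μ) i
    have hint : ∫ ω : ι → Ω, X (ω i) ∂P = a := by
      rw [← integral_map hmp.measurable.aemeasurable hX.aestronglyMeasurable, hmp.map_eq]
    rw [← hint]
    exact hasSubgaussianMGF_of_mem_Icc (Measurable.aemeasurable (by fun_prop))
      (.of_forall fun ω ↦ hX01 (ω i))
  have htail := HasSubgaussianMGF.measure_sum_ge_le_of_iIndepFun hindep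
    (s := Finset.univ) (fun i _ ↦ hsubgaussian i) (ε := Fintype.card ι * ε) (by positivity)
  calc P {ω | Fintype.card ι * (A + ε) ≤ ∑ i, X (ω i)}
      ≤ P {ω | Fintype.card ι * ε ≤ ∑ i, (X (ω i) - a)} := by
        refine measure_mono fun ω hω ↦ ?_
        simp only [mem_ofPred_eq, Finset.sum_sub_distrib, Finset.sum_const, Finset.card_univ,
          nsmul_eq_mul] at hω ⊢
        nlinarith [Nat.cast_nonneg (α := ℝ) (Fintype.card ι)]
    _ ≤ _ := by
        rw [← ofReal_measureReal]
        refine ENNReal.ofReal_le_ofReal (htail.trans_eq (congrArg Real.exp ?_))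
        rcases eq_or_ne (Fintype.card ι : ℝ) 0 with h0 | h0
        · simp [h0]
        · simp
          field_simp

lemma measure_pi_le_sum_le_exp_of_lintegral_exp_le {Y : Ω → ℝ} (hY : Measurable Y) {a : ℝ}
    (hexp : ∫⁻ ω, ENNReal.ofReal (Real.exp (Y ω)) ∂μ ≤ ENNReal.ofReal (Real.exp a)) (c : ℝ) :
    Measure.pi (fun _ : ι ↦ μ) {ω | c ≤ ∑ i, Y (ω i)} ≤
      ENNReal.ofReal (Real.exp (Fintype.card ι * a - c)) := by
  set P := Measure.pi fun _ : ι ↦ μ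
  have hprod : ∫⁻ ω, ∏ i, ENNReal.ofReal (Real.exp (Y (ω i))) ∂P ≤
      ENNReal.ofReal (Real.exp (Fintype.card ι * a)) := by
    have hindep := iIndepFun_pi (μ := fun _ : ι ↦ μ)
      (X := fun _ ω ↦ ENNReal.ofReal (Real.exp (Y ω))) fun _ ↦ by fun_prop
    rw [lintegral_prod_eq_prod_lintegral_of_indepFun Finset.univ _ hindep (fun _ ↦ by fun_prop),
      Real.exp_nat_mul, ENNReal.ofReal_pow (Real.exp_pos a).le]
    refine Finset.prod_le_pow_card _ _ _ fun i _ ↦ hexp.trans' (le_of_eq ?_)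
    exact (measurePreserving_eval (fun _ : ι ↦ μ) i).lintegral_comp
      (f := fun ω ↦ ENNReal.ofReal (Real.exp (Y ω))) (by fun_prop)
  calc P {ω | c ≤ ∑ i, Y (ω i)}
      ≤ P {ω | ENNReal.ofReal (Real.exp c) ≤ ∏ i, ENNReal.ofReal (Real.exp (Y (ω i)))} := by
        refine measure_mono fun ω hω ↦ ?_
        simp only [mem_ofPred_eq] at hω ⊢
        rw [← ENNReal.ofReal_prod_of_nonneg fun _ _ ↦ (Real.exp_pos _).le, ← Real.exp_sum]
        gcongr
    _ ≤ (∫⁻ ω, ∏ i, ENNReal.ofReal (Real.exp (Y (ω i))) ∂P) / ENNReal.ofReal (Real.exp c) :=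
        meas_ge_le_lintegral_div (Measurable.aemeasurable (by fun_prop))
          (by simp [Real.exp_pos]) (by simp)
    _ ≤ ENNReal.ofReal (Real.exp (Fintype.card ι * a)) / ENNReal.ofReal (Real.exp c) := by gcongr
    _ = _ := by rw [← ENNReal.ofReal_div_of_pos (Real.exp_pos c), Real.exp_sub]

end Concentration

section Nets

variable {E F : Type*} [NormedAddCommGroup E] [NormedSpace ℝ E] [NormedAddCommGroup F]
  [NormedSpace ℝ F]

lemma card_le_of_isSeparated [FiniteDimensional ℝ E] {δ : ℝ} (hδ : 0 < δ) (hδ1 : δ ≤ 1)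
    {S : Finset E} (hS : (S : Set E) ⊆ closedBall 0 1)
    (hsep : IsSeparated (ENNReal.ofReal δ) (S : Set E)) :
    (S.card : ℝ) ≤ (3 / δ) ^ Module.finrank ℝ E := by
  borelize E
  set μ : Measure E := Measure.addHaar
  have hdisj : (S : Set E).PairwiseDisjoint fun x ↦ ball x (δ / 2) := by
    intro x hx y hy hxy
    apply ball_disjoint_ball
    have hlt : ENNReal.ofReal δ < edist x y := hsep hx hy hxy
    rw [edist_dist, ENNReal.ofReal_lt_ofReal_iff (dist_pos.2 hxy)] at hlt
    linarith
  have hsub : ⋃ x ∈ S, ball x (δ / 2) ⊆ ball 0 (3 / 2) := by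
    refine iUnion₂_subset fun x hx ↦ ball_subset_ball' ?_
    linarith [mem_closedBall.1 (hS hx)]
  have hvol := measure_mono (μ := μ) hsub
  rw [measure_biUnion_finset hdisj fun _ _ ↦ measurableSet_ball,
    Finset.sum_congr rfl fun x _ ↦ Measure.addHaar_ball_of_pos μ x (half_pos hδ),
    Measure.addHaar_ball_of_pos μ 0 (by norm_num : (0 : ℝ) < 3 / 2), Finset.sum_const,
    nsmul_eq_mul, ← mul_assoc,
    ENNReal.mul_le_mul_iff_left (measure_ball_pos μ _ one_pos).ne' measure_ball_lt_top.ne,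
    ← ENNReal.ofReal_natCast, ← ENNReal.ofReal_mul (by positivity),
    ENNReal.ofReal_le_ofReal_iff (by positivity), ← le_div_iff₀ (by positivity), ← div_pow] at hvol
  rwa [show 3 / δ = 3 / 2 / (δ / 2) by field_simp]

lemma packingNumber_le_of_subset_closedBall [FiniteDimensional ℝ E] {δ : NNReal} (hδ : 0 < δ)
    (hδ1 : δ ≤ 1) {A : Set E} (hA : A ⊆ closedBall 0 1) :
    packingNumber δ A ≤ ⌊(3 / δ : ℝ) ^ Module.finrank ℝ E⌋₊ := by
  refine iSup₂_le fun C hCA ↦ iSup_le fun hC ↦ ?_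
  by_contra! hlt
  obtain ⟨S, hSC, hScard⟩ := exists_subset_encard_eq (Order.add_one_le_of_lt hlt)
  have hSfin : S.Finite := finite_of_encard_eq_coe (k := _ + 1) (by exact_mod_cast hScard)
  lift S to Finset E using hSfin
  have hle := card_le_of_isSeparated (NNReal.coe_pos.2 hδ) (by exact_mod_cast hδ1)
    (hSC.trans (hCA.trans hA)) (by simpa using hC.subset hSC)
  rw [encard_coe_eq_coe_finsetCard] at hScard
  have := Nat.le_floor hle
  have : S.card = ⌊(3 / δ : ℝ) ^ Module.finrank ℝ E⌋₊ + 1 := by exact_mod_cast hScard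
  lia

lemma exists_finset_net_of_subset_closedBall [FiniteDimensional ℝ E] {δ : ℝ} (hδ : 0 < δ)
    (hδ1 : δ ≤ 1) {A : Set E} (hA : A ⊆ closedBall 0 1) :
    ∃ S : Finset E, (S : Set E) ⊆ A ∧ (∀ x ∈ A, ∃ y ∈ S, ‖x - y‖ ≤ δ) ∧
      (S.card : ℝ) ≤ (3 / δ) ^ Module.finrank ℝ E := by
  lift δ to NNReal using hδ.le
  have hpack := packingNumber_le_of_subset_closedBall (NNReal.coe_pos.1 hδ)
    (by exact_mod_cast hδ1) hA
  have hne : packingNumber δ A ≠ ⊤ := ne_top_of_le_ne_top (ENat.natCast_ne_top _) hpack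
  have hfin : (maximalSeparatedSet δ A).Finite := by
    rw [← encard_ne_top_iff, encard_maximalSeparatedSet hne]
    exact hne
  have hcover := isCover_iff_subset_iUnion_closedBall.1 (isCover_maximalSeparatedSet hne)
  refine ⟨hfin.toFinset, by simpa using maximalSeparatedSet_subset, fun x hx ↦ ?_, ?_⟩
  · obtain ⟨y, hy, hxy⟩ := mem_iUnion₂.1 (hcover hx)
    exact ⟨y, by simpa using hy, by simpa [dist_eq_norm] using hxy⟩
  · exact card_le_of_isSeparated hδ hδ1 (by simpa using maximalSeparatedSet_subset.trans hA)
      (by simpa using isSeparated_maximalSeparatedSet)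

lemma exists_finset_net_Icc {R ε : ℝ} (hR : 0 ≤ R) (hε : 0 < ε) :
    ∃ T : Finset ℝ, (∀ t, |t| ≤ R → ∃ s ∈ T, |t - s| ≤ ε) ∧ (T.card : ℝ) ≤ 2 * R / ε + 2 := by
  classical
  refine ⟨(Finset.range (⌊2 * R / ε⌋₊ + 1)).image fun k : ℕ ↦ k * ε - R, fun t ht ↦ ?_, ?_⟩
  · obtain ⟨hlo, hhi⟩ := abs_le.1 ht
    have hfloor := Nat.floor_le (a := (t + R) / ε) (div_nonneg (by linarith) hε.le)
    have hfloor' := Nat.lt_floor_add_one ((t + R) / ε)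
    rw [le_div_iff₀ hε] at hfloor
    rw [div_lt_iff₀ hε] at hfloor'
    refine ⟨_, Finset.mem_image_of_mem _ (Finset.mem_range_succ_iff.2
      (Nat.floor_le_floor (by gcongr; linarith : (t + R) / ε ≤ 2 * R / ε))), ?_⟩
    rw [abs_le]
    constructor <;> linarith
  · refine (Nat.cast_le.2 Finset.card_image_le).trans ?_
    rw [Finset.card_range, Nat.cast_succ]
    linarith [Nat.floor_le (by positivity : 0 ≤ 2 * R / ε)]

lemma opNorm_le_of_net {A : E →L[ℝ] F} {B δ : ℝ} (hB : 0 ≤ B) (hδ : δ < 1) {S : Finset E}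
    (hnet : ∀ x : E, ‖x‖ = 1 → ∃ y ∈ S, ‖x - y‖ ≤ δ) (hS : ∀ y ∈ S, ‖A y‖ ≤ B) :
    ‖A‖ ≤ B / (1 - δ) := by
  rcases subsingleton_or_nontrivial E with _ | _
  · rw [Subsingleton.elim A 0, norm_zero]
    exact div_nonneg hB (sub_nonneg.2 hδ.le)
  obtain ⟨x₀, hx₀⟩ := exists_norm_eq E zero_le_one
  obtain ⟨y₀, -, hy₀⟩ := hnet x₀ hx₀
  have hδ0 : 0 ≤ δ := (norm_nonneg _).trans hy₀
  have hself : ‖A‖ ≤ B + ‖A‖ * δ := by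
    refine A.opNorm_le_of_unit_norm (by positivity) fun x hx ↦ ?_
    obtain ⟨y, hy, hxy⟩ := hnet x hx
    calc ‖A x‖ = ‖A y + A (x - y)‖ := by rw [map_sub, add_sub_cancel]
      _ ≤ ‖A y‖ + ‖A‖ * ‖x - y‖ := norm_add_le_of_le le_rfl (A.le_opNorm _)
      _ ≤ B + ‖A‖ * δ := by gcongr; exact hS y hy
  rw [le_div_iff₀ (by linarith)]
  linarith

end Nets

section Frame

variable {ι E : Type*} [Fintype ι] [NormedAddCommGroup E] [InnerProductSpace ℝ E]

lemma sum_inner_sq_le_of_net {v : ι → E} {S : Finset E} {δ B : ℝ} (hδ : δ ≤ 1 / 2) (hB : 0 ≤ B)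
    (hnet : ∀ x : E, ‖x‖ = 1 → ∃ y ∈ S, ‖x - y‖ ≤ δ)
    (hS : ∀ y ∈ S, ∑ i, ⟪y, v i⟫ ^ 2 ≤ B ^ 2) (x : E) :
    ∑ i, ⟪x, v i⟫ ^ 2 ≤ (2 * B * ‖x‖) ^ 2 := by
  let A : E →L[ℝ] EuclideanSpace ℝ ι :=
    (PiLp.continuousLinearEquiv 2 ℝ fun _ : ι ↦ ℝ).symm.toContinuousLinearMap ∘L
      ContinuousLinearMap.pi fun i ↦ innerSL ℝ (v i)
  have hA (y : E) : ‖A y‖ ^ 2 = ∑ i, ⟪y, v i⟫ ^ 2 := by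
    simp [A, EuclideanSpace.norm_sq_eq, real_inner_comm]
  have hAnorm : ‖A‖ ≤ 2 * B := by
    refine (opNorm_le_of_net hB (by linarith) hnet fun y hy ↦ ?_).trans ?_
    · exact (sq_le_sq₀ (norm_nonneg _) hB).1 ((hA y).trans_le (hS y hy))
    · rw [div_le_iff₀ (by linarith)]
      nlinarith
  rw [← hA]
  gcongr
  exact A.le_of_opNorm_le hAnorm x

lemma sum_abs_inner_le_of_net {v : ι → E} {S : Finset E} {δ B : ℝ} (hδ : δ ≤ 1 / 2) (hB : 0 ≤ B)
    (hnet : ∀ x : E, ‖x‖ = 1 → ∃ y ∈ S, ‖x - y‖ ≤ δ)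
    (hS : ∀ y ∈ S, ∑ i, ⟪y, v i⟫ ^ 2 ≤ B ^ 2) (x : E) :
    ∑ i, |⟪x, v i⟫| ≤ √(Fintype.card ι) * (2 * B * ‖x‖) := by
  refine (sq_le_sq₀ (Finset.sum_nonneg fun _ _ ↦ abs_nonneg _) (by positivity)).1 ?_
  calc (∑ i, |⟪x, v i⟫|) ^ 2 ≤ Fintype.card ι * ∑ i, |⟪x, v i⟫| ^ 2 := sq_sum_le_card_mul_sum_sq
    _ ≤ Fintype.card ι * (2 * B * ‖x‖) ^ 2 := by
        simp_rw [sq_abs]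
        gcongr
        exact sum_inner_sq_le_of_net hδ hB hnet hS x
    _ = _ := by rw [mul_pow (√_), Real.sq_sqrt (Nat.cast_nonneg _)]

end Frame

section Sample

variable {n N : ℕ} {r t ε δ : ℝ} {θ : Fin N → sphere (0 : EuclideanSpace ℝ (Fin n)) 1}
  {ξ : EuclideanSpace ℝ (Fin n)} {S : Finset (EuclideanSpace ℝ (Fin n))} {T : Finset ℝ}
  {M : ℝ → ℝ}

lemma Ffun_le_of_forall_le {b : ℝ} (hb : 0 ≤ b)
    (h : ∀ k, gphi (r * ⟪ξ, (θ k : EuclideanSpace ℝ (Fin n))⟫ + t) ≤ b) :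
    Ffun r t θ ξ ≤ b := by
  have hsum := Finset.sum_le_card_nsmul Finset.univ _ b fun k _ ↦ h k
  rw [Finset.card_univ, Fintype.card_fin, nsmul_eq_mul] at hsum
  rw [Ffun, one_div, inv_mul_eq_div]
  exact div_le_of_le_mul₀ (Nat.cast_nonneg N) hb (by linarith)

lemma Ffun_le_one : Ffun r t θ ξ ≤ 1 :=
  Ffun_le_of_forall_le zero_le_one fun _ ↦ gphi_le_one _

lemma Ffun_le_inv_of_add_le_abs {a : ℝ} (ha : 0 < a) (hr : 0 ≤ r) (hξ : ‖ξ‖ = 1)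
    (ht : r + a ≤ |t|) : Ffun r t θ ξ ≤ a⁻¹ := by
  refine Ffun_le_of_forall_le (inv_nonneg.2 ha.le) fun k ↦ gphi_le_inv ha ?_
  have hinner : |⟪ξ, (θ k : EuclideanSpace ℝ (Fin n))⟫| ≤ 1 := by
    simpa [hξ] using abs_real_inner_le_norm ξ (θ k : EuclideanSpace ℝ (Fin n))
  have hr_inner : |r * ⟪ξ, (θ k : EuclideanSpace ℝ (Fin n))⟫| ≤ r := by
    rw [abs_mul, abs_of_nonneg hr]
    exact mul_le_of_le_one_right hr hinner
  have htri := abs_sub_abs_le_abs_sub t (-(r * ⟪ξ, (θ k : EuclideanSpace ℝ (Fin n))⟫))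
  rw [abs_neg, sub_neg_eq_add, add_comm t] at htri
  linarith

lemma Ffun_le_Ffun_add (hN : 0 < N) (hr : 0 ≤ r) (x : EuclideanSpace ℝ (Fin n)) (s : ℝ) :
    Ffun r t θ ξ ≤
      Ffun r s θ x + r / N * ∑ k, |⟪ξ - x, (θ k : EuclideanSpace ℝ (Fin n))⟫| + |t - s| := by
  have hterm (k : Fin N) : gphi (r * ⟪ξ, (θ k : EuclideanSpace ℝ (Fin n))⟫ + t) ≤
      gphi (r * ⟪x, (θ k : EuclideanSpace ℝ (Fin n))⟫ + s) +
        (r * |⟪ξ - x, (θ k : EuclideanSpace ℝ (Fin n))⟫| + |t - s|) := by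
    refine (gphi_le_add_abs_sub _ (r * ⟪x, (θ k : EuclideanSpace ℝ (Fin n))⟫ + s)).trans ?_
    gcongr
    rw [add_sub_add_comm, ← mul_sub, ← inner_sub_left]
    exact (abs_add_le _ _).trans_eq (by rw [abs_mul, abs_of_nonneg hr])
  calc Ffun r t θ ξ ≤ 1 / N * ∑ k, (gphi (r * ⟪x, (θ k : EuclideanSpace ℝ (Fin n))⟫ + s) +
        (r * |⟪ξ - x, (θ k : EuclideanSpace ℝ (Fin n))⟫| + |t - s|)) := by
        unfold Ffun
        gcongr
        exact hterm _
    _ = _ := by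
        have hN' : (N : ℝ) ≠ 0 := by positivity
        rw [Finset.sum_add_distrib, Finset.sum_add_distrib, ← Finset.mul_sum, Finset.sum_const,
          Finset.card_univ, Fintype.card_fin, nsmul_eq_mul, Ffun]
        field_simp
        ring

/-- The samples `θ` that are typical for the directions in `S` and the shifts in `T`: on `S` the
quadratic form `∑ ⟨x, θ_k⟩²` exceeds its mean `N / n` by at most the factor `100`, and on `S × T`
the average `F` exceeds `M t`, which stands for an upper bound of its mean, by at most `ε`. The
first condition is written for the exponentially integrable variables `n ⟨x, θ_k⟩² / 10`. -/
def typicalSamples (N : ℕ) (S : Finset (EuclideanSpace ℝ (Fin n))) (T : Finset ℝ) (r ε : ℝ)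
    (M : ℝ → ℝ) : Set (Fin N → sphere (0 : EuclideanSpace ℝ (Fin n)) 1) :=
  {θ | ∀ x ∈ S, ∑ k, n * ⟪x, (θ k : EuclideanSpace ℝ (Fin n))⟫ ^ 2 / 10 ≤ (10 * N : ℝ) ∧
    ∀ t ∈ T, Ffun r t θ x ≤ M t + ε}

lemma sum_abs_inner_le_of_mem_typicalSamples (hn : 0 < n) (hδ : δ ≤ 1 / 2)
    (hnet : ∀ x : EuclideanSpace ℝ (Fin n), ‖x‖ = 1 → ∃ y ∈ S, ‖x - y‖ ≤ δ)
    (hθ : θ ∈ typicalSamples N S T r ε M) (η : EuclideanSpace ℝ (Fin n)) :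
    ∑ k, |⟪η, (θ k : EuclideanSpace ℝ (Fin n))⟫| ≤ 20 * N * ‖η‖ / √n := by
  have hn' : (0 : ℝ) < n := by exact_mod_cast hn
  refine (sum_abs_inner_le_of_net (B := 10 * √N / √n) hδ (by positivity) hnet
    (fun x hx ↦ ?_) η).trans_eq ?_
  · rw [div_pow, mul_pow, Real.sq_sqrt (Nat.cast_nonneg N), Real.sq_sqrt hn'.le,
      le_div_iff₀ hn', mul_comm, Finset.mul_sum]
    have hx' := (hθ x hx).1
    rw [← Finset.sum_div, div_le_iff₀ (by norm_num)] at hx'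
    linarith
  · rw [Fintype.card_fin]
    linear_combination 20 * ‖η‖ / √n * Real.mul_self_sqrt (Nat.cast_nonneg (α := ℝ) N)

lemma Ffun_le_of_mem_typicalSamples (hn : 0 < n) (hN : 0 < N) (hr : 0 ≤ r) (hε : 0 ≤ ε)
    (hM : ∀ t, 0 ≤ M t) (hMlip : ∀ s t, M s ≤ M t + |s - t|) (hδ : δ ≤ 1 / 2)
    (hS : ∀ x : EuclideanSpace ℝ (Fin n), ‖x‖ = 1 → ∃ y ∈ S, ‖x - y‖ ≤ δ)
    (hT : ∀ t, |t| ≤ r + N → ∃ s ∈ T, |t - s| ≤ 1 / N)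
    (hθ : θ ∈ typicalSamples N S T r ε M) (hξ : ‖ξ‖ = 1) (t : ℝ) :
    Ffun r t θ ξ ≤ M t + ε + 20 * r * δ / √n + 2 / N := by
  have hN' : (0 : ℝ) < N := by exact_mod_cast hN
  obtain ⟨x, hx, hξx⟩ := hS ξ hξ
  have hδ0 : 0 ≤ δ := (norm_nonneg _).trans hξx
  rw [← one_add_one_eq_two, add_div]
  rcases le_total |t| (r + N) with ht | ht
  · obtain ⟨s, hs, hts⟩ := hT t ht
    have hmove : r / N * ∑ k, |⟪ξ - x, (θ k : EuclideanSpace ℝ (Fin n))⟫| ≤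
        20 * r * δ / √n := by
      calc _ ≤ r / N * (20 * N * ‖ξ - x‖ / √n) := by
            gcongr
            exact sum_abs_inner_le_of_mem_typicalSamples hn hδ hS hθ _
        _ = 20 * r * ‖ξ - x‖ / √n := by field_simp
        _ ≤ _ := by gcongr
    linarith [Ffun_le_Ffun_add (θ := θ) (t := t) (ξ := ξ) hN hr x s, (hθ x hx).2 s hs,
      hMlip s t, abs_sub_comm s t]
  · have hfar := Ffun_le_inv_of_add_le_abs (θ := θ) hN' hr hξ ht
    rw [← one_div] at hfar
    have herr : 0 ≤ 20 * r * δ / √n + 1 / N := by positivity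
    linarith [hM t]

lemma sphereProduct_lt_sum_inner_sq_le (hn : 5 ≤ n) (hξ : ‖ξ‖ = 1) :
    sphereProduct n N {θ | 10 * (N : ℝ) <
      ∑ k, n * ⟪ξ, (θ k : EuclideanSpace ℝ (Fin n))⟫ ^ 2 / 10} ≤
      ENNReal.ofReal (Real.exp (-(9 * N))) := by
  have : NeZero n := ⟨by lia⟩
  have hexp := (lintegral_uniformSphere_exp_inner_sq_le hn hξ).trans
    (ENNReal.ofReal_le_ofReal (by linarith [Real.add_one_le_exp (1 : ℝ)] : 2 ≤ Real.exp 1))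
  have htail := measure_pi_le_sum_le_exp_of_lintegral_exp_le (ι := Fin N) (by fun_prop) hexp
    (10 * N)
  rw [Fintype.card_fin, show (N : ℝ) * 1 - 10 * N = -(9 * N) by ring] at htail
  exact le_trans (measure_mono fun θ (hθ : 10 * (N : ℝ) < _) ↦ hθ.le) htail

lemma sphereProduct_add_lt_Ffun_le [NeZero n] {A : ℝ} (hA : 0 ≤ A) (hε : 0 ≤ ε)
    (hmean : ∫⁻ θ, ENNReal.ofReal (gphi (r * ⟪ξ, (θ : EuclideanSpace ℝ (Fin n))⟫ + t))
      ∂uniformSphere n ≤ ENNReal.ofReal A) :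
    sphereProduct n N {θ | A + ε < Ffun r t θ ξ} ≤
      ENNReal.ofReal (Real.exp (-(2 * N * ε ^ 2))) := by
  have htail := measure_pi_le_sum_le_exp_of_mem_Icc (ι := Fin N) (by fun_prop)
    (fun _ ↦ ⟨gphi_nonneg _, gphi_le_one _⟩) hA hmean hε
  rw [Fintype.card_fin] at htail
  refine (measure_mono fun θ (hθ : A + ε < Ffun r t θ ξ) ↦ ?_).trans htail
  have hN : (0 : ℝ) < N := by
    rcases Nat.eq_zero_or_pos N with rfl | h
    · simp only [Ffun, CharP.cast_eq_zero, div_zero, zero_mul] at hθ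
      linarith
    · exact_mod_cast h
  rw [Ffun, one_div, inv_mul_eq_div, lt_div_iff₀' hN] at hθ
  exact hθ.le

lemma sphereProduct_compl_typicalSamples_le (hn : 5 ≤ n) (hS : ∀ x ∈ S, ‖x‖ = 1)
    (hM : ∀ t, 0 ≤ M t) (hε : 0 ≤ ε)
    (hmean : ∀ x : EuclideanSpace ℝ (Fin n), ‖x‖ = 1 → ∀ t,
      ∫⁻ θ, ENNReal.ofReal (gphi (r * ⟪x, (θ : EuclideanSpace ℝ (Fin n))⟫ + t))
        ∂uniformSphere n ≤ ENNReal.ofReal (M t)) :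
    sphereProduct n N (typicalSamples N S T r ε M)ᶜ ≤
      ENNReal.ofReal (S.card * (Real.exp (-(9 * N)) +
        T.card * Real.exp (-(2 * N * ε ^ 2)))) := by
  have : NeZero n := ⟨by lia⟩
  have hcompl : (typicalSamples N S T r ε M)ᶜ =
      ⋃ x ∈ S, ({θ | 10 * (N : ℝ) < ∑ k, n * ⟪x, (θ k : EuclideanSpace ℝ (Fin n))⟫ ^ 2 / 10} ∪
        ⋃ t ∈ T, {θ | M t + ε < Ffun r t θ x}) := by
    ext θ
    simp only [typicalSamples, mem_compl_iff, mem_iUnion, mem_union, mem_ofPred_eq, not_forall,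
      not_and_or, not_le, exists_prop]
  calc _ ≤ ∑ x ∈ S, (sphereProduct n N {θ | 10 * (N : ℝ) <
          ∑ k, n * ⟪x, (θ k : EuclideanSpace ℝ (Fin n))⟫ ^ 2 / 10} +
        ∑ t ∈ T, sphereProduct n N {θ | M t + ε < Ffun r t θ x}) := by
        rw [hcompl]
        refine (measure_biUnion_finset_le _ _).trans (Finset.sum_le_sum fun x _ ↦ ?_)
        exact (measure_union_le _ _).trans (add_le_add_right (measure_biUnion_finset_le _ _) _)
    _ ≤ ∑ _x ∈ S, (ENNReal.ofReal (Real.exp (-(9 * N))) +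
        ∑ _t ∈ T, ENNReal.ofReal (Real.exp (-(2 * N * ε ^ 2)))) := by
        gcongr with x hx t
        · exact sphereProduct_lt_sum_inner_sq_le hn (hS x hx)
        · exact sphereProduct_add_lt_Ffun_le (hM t) hε (hmean x (hS x hx) t)
    _ = _ := by
        rw [Finset.sum_const, Finset.sum_const, nsmul_eq_mul, nsmul_eq_mul,
          ENNReal.ofReal_mul (by positivity), ENNReal.ofReal_add (by positivity) (by positivity),
          ENNReal.ofReal_mul (by positivity), ENNReal.ofReal_natCast, ENNReal.ofReal_natCast]

end Sample

section UnionBound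

lemma three_div_exp_neg_pow_le {L : ℝ} (hL : 1 ≤ L) (n : ℕ) :
    (3 / Real.exp (-L)) ^ n ≤ Real.exp (3 * (n * L)) := by
  have h3 : (3 : ℝ) ≤ Real.exp (2 * L) := by linarith [Real.add_one_le_exp (2 * L)]
  calc (3 / Real.exp (-L)) ^ n = (3 * Real.exp L) ^ n := by rw [Real.exp_neg, div_inv_eq_mul]
    _ ≤ (Real.exp (2 * L) * Real.exp L) ^ n := by gcongr
    _ = Real.exp (3 * (n * L)) := by
        rw [← Real.exp_add, ← Real.exp_nat_mul]
        ring_nf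

lemma two_mul_add_div_inv_add_two_le_exp {d N r L : ℝ} (hd : 5 ≤ d) (hdN : d ≤ N)
    (hr : 4 * √d ≤ r) (hL : 1 ≤ L) (hLr : Real.exp L = N * r / (d * √d)) :
    2 * (r + N) / (1 / N) + 2 ≤ Real.exp (4 * (d * L)) := by
  have hs : 0 < √d := Real.sqrt_pos.2 (by linarith)
  have hx1 : 1 ≤ Real.exp L := Real.one_le_exp (by linarith)
  have hNr : N * r = d * √d * Real.exp L := by
    rw [hLr]
    field_simp
  have hNr_le : N * r ≤ d ^ 2 * Real.exp L := by
    rw [hNr, pow_two]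
    gcongr
    exact Real.sqrt_le_iff.2 ⟨by linarith, by nlinarith⟩
  have hN_le : N ≤ d * Real.exp L := by nlinarith
  have hN0 : 0 ≤ N := by linarith
  have hd_exp : d ≤ Real.exp d := by linarith [Real.add_one_le_exp d]
  have h6 : (6 : ℝ) ≤ Real.exp 5 := by linarith [Real.add_one_le_exp (5 : ℝ)]
  have hx : 1 ≤ d ^ 2 * Real.exp L ^ 2 := one_le_mul_of_one_le_of_one_le
    (one_le_pow₀ (by linarith)) (one_le_pow₀ hx1)
  calc 2 * (r + N) / (1 / N) + 2 = 2 * (N * r) + 2 * N ^ 2 + 2 := by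
        rw [div_div_eq_mul_div, div_one]
        ring
    _ ≤ 2 * (d ^ 2 * Real.exp L) + 2 * (d * Real.exp L) ^ 2 + 2 := by gcongr
    _ ≤ 6 * (d ^ 2 * Real.exp L ^ 2) := by nlinarith [le_self_pow₀ hx1 two_ne_zero]
    _ ≤ Real.exp 5 * (Real.exp d ^ 2 * Real.exp L ^ 2) := by gcongr
    _ = Real.exp (5 + 2 * (d + L)) := by
        rw [← mul_pow, ← Real.exp_add, ← Real.exp_nat_mul, ← Real.exp_add, Nat.cast_ofNat]
    _ ≤ Real.exp (4 * (d * L)) := by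
        gcongr
        nlinarith

lemma mul_exp_add_mul_exp_le {d N L s τ : ℝ} (hd : 5 ≤ d) (hL : 1 ≤ L) (hN : d * L ≤ N)
    (hτ0 : 0 ≤ τ) (hs : s ≤ Real.exp (3 * (d * L))) (hτ : τ ≤ Real.exp (4 * (d * L))) :
    s * (Real.exp (-(9 * N)) + τ * Real.exp (-(18 * (d * L)))) ≤ Real.exp (-(5 * d)) := by
  have hdL : d ≤ d * L := le_mul_of_one_le_right (by linarith) hL
  calc s * (Real.exp (-(9 * N)) + τ * Real.exp (-(18 * (d * L))))
      ≤ Real.exp (3 * (d * L)) * (Real.exp (-(9 * (d * L))) +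
          Real.exp (4 * (d * L)) * Real.exp (-(18 * (d * L)))) := by gcongr
    _ = Real.exp (-(6 * (d * L))) + Real.exp (-(11 * (d * L))) := by
        rw [mul_add, ← Real.exp_add, ← Real.exp_add, ← Real.exp_add]
        ring_nf
    _ ≤ Real.exp (-(6 * d)) + Real.exp (-(6 * d)) := by
        gcongr
        all_goals linarith
    _ ≤ Real.exp 1 * Real.exp (-(6 * d)) := by
        rw [← two_mul]
        gcongr
        linarith [Real.add_one_le_exp (1 : ℝ)]
    _ ≤ Real.exp (-(5 * d)) := by
        rw [← Real.exp_add]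
        gcongr
        linarith

lemma ofReal_one_sub_le_measure_of_compl_le {Ω : Type*} [MeasurableSpace Ω] {μ : Measure Ω}
    [IsProbabilityMeasure μ] {s : Set Ω} {p : ℝ} (hp : 0 ≤ p) (h : μ sᶜ ≤ ENNReal.ofReal p) :
    ENNReal.ofReal (1 - p) ≤ μ s := by
  rw [ENNReal.ofReal_sub _ hp, ENNReal.ofReal_one, tsub_le_iff_right, ← measure_univ (μ := μ)]
  exact (measure_univ_le_add_compl s).trans (by gcongr)

end UnionBound

instance isProbabilityMeasure_sphereProduct (n N : ℕ) [NeZero n] :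
    IsProbabilityMeasure (sphereProduct n N) := by
  unfold sphereProduct
  infer_instance

lemma discretization_error_le {d N L r : ℝ} (hd : 5 ≤ d) (hdN : d ≤ N) (hr : 0 < r) (hL : 1 ≤ L)
    (hLr : Real.exp L = N * r / (d * √d)) :
    20 * r * Real.exp (-L) / √d + 2 / N ≤ 22 * √(d * L / N) := by
  have hs : √d ≠ 0 := (Real.sqrt_pos.2 (by linarith)).ne'
  have hN : 0 < N := by linarith
  have hdN_le : d / N ≤ √(d * L / N) := by
    refine Real.le_sqrt_of_sq_le ?_
    calc (d / N) ^ 2 ≤ d / N := by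
          have := (div_le_one hN).2 hdN
          nlinarith [show 0 ≤ d / N by positivity]
      _ ≤ d * L / N := by
          gcongr
          exact le_mul_of_one_le_right (by linarith) hL
  have hnet : 20 * r * Real.exp (-L) / √d = 20 * (d / N) := by
    rw [Real.exp_neg, hLr]
    field_simp [hs]
  have hinv : 2 / N ≤ 2 * (d / N) := by
    rw [← mul_div_assoc]
    gcongr
    linarith
  linarith

lemma one_le_log_of_four_mul_sqrt_le {d N r : ℝ} (hd : 0 < d) (hdN : d ≤ N) (hr : 4 * √d ≤ r) :
    1 ≤ Real.log (N * r / (d * √d)) := by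
  have hs : 0 < √d := Real.sqrt_pos.2 hd
  have hratio : 4 ≤ N * r / (d * √d) := by
    rw [le_div_iff₀ (mul_pos hd hs)]
    nlinarith [mul_le_mul hdN hr (by positivity) (by linarith)]
  exact (Real.le_log_iff_exp_le (by linarith)).2 (by linarith [Real.exp_one_lt_d9])

lemma one_le_bound_of_le_four_mul_sqrt {d r a : ℝ} (hr : 0 < r) (hrd : r ≤ 4 * √d) (ha : 0 ≤ a) :
    1 ≤ a + (1 + 12 * √d / r) * (√d / r) := by
  have hratio : 1 / 4 ≤ √d / r := by
    rw [div_le_div_iff₀ (by norm_num) hr]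
    linarith
  rw [mul_div_assoc]
  nlinarith

section Main

variable {n N : ℕ} {r L : ℝ}

lemma div_mul_gphi_le_add_abs_sub {d r : ℝ} (hd : 0 < d) (hr : 4 * √d ≤ r) (s t : ℝ) :
    √d / r * gphi ((1 - 4 * √d / r) * √d * s / r) ≤
      √d / r * gphi ((1 - 4 * √d / r) * √d * t / r) + |s - t| := by
  have hs : 0 < √d := Real.sqrt_pos.2 hd
  have hr0 : 0 < r := by linarith
  have hratio0 : 0 ≤ √d / r := by positivity
  have hratio : √d / r ≤ 1 / 4 := by
    rw [div_le_div_iff₀ hr0 (by norm_num)]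
    linarith
  have hc : |(1 - 4 * (√d / r)) * (√d / r)| ≤ 1 := abs_le.2 ⟨by nlinarith, by nlinarith⟩
  convert mul_gphi_mul_le_add_abs_sub hratio0 (by linarith) hc s t using 4 <;> ring_nf

lemma ofReal_one_sub_exp_le_sphereProduct_typicalSamples (hn : 5 ≤ n) (hr : 4 * √n ≤ r)
    (hrn : r ≤ n * √n) (hL : 1 ≤ L) (hNL : n * L ≤ N) {S : Finset (EuclideanSpace ℝ (Fin n))}
    (hS : ∀ x ∈ S, ‖x‖ = 1) (hScard : (S.card : ℝ) ≤ Real.exp (3 * (n * L))) {T : Finset ℝ}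
    (hTcard : (T.card : ℝ) ≤ Real.exp (4 * (n * L))) :
    ENNReal.ofReal (1 - Real.exp (-(5 * n))) ≤
      sphereProduct n N (typicalSamples N S T r (3 * √(n * L / N)) fun t ↦
        √n / r * gphi ((1 - 4 * √n / r) * √n * t / r)) := by
  have : NeZero n := ⟨by lia⟩
  have hn' : (5 : ℝ) ≤ n := by exact_mod_cast hn
  have hr0 : 0 < r := lt_of_lt_of_le (by positivity) hr
  have hN : 0 < (N : ℝ) := by nlinarith
  have hexp : 2 * (N : ℝ) * (3 * √(n * L / N)) ^ 2 = 18 * (n * L) := by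
    rw [mul_pow, Real.sq_sqrt (by positivity)]
    field_simp
    norm_num
  refine ofReal_one_sub_le_measure_of_compl_le (Real.exp_pos _).le
    ((sphereProduct_compl_typicalSamples_le hn hS
      (fun t ↦ mul_nonneg (by positivity) (gphi_nonneg _)) (by positivity) fun x hx t ↦
        lintegral_uniformSphere_gphi_le hn hr hrn hx t).trans (ENNReal.ofReal_le_ofReal ?_))
  rw [hexp]
  exact mul_exp_add_mul_exp_le hn' hL hNL (Nat.cast_nonneg _) hScard hTcard

lemma ofReal_one_sub_exp_le_sphereProduct (hn : 5 ≤ n) (hnN : n ≤ N) (hr : 4 * √n ≤ r)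
    (hrn : r ≤ n * √n) (hL : 1 ≤ L) (hLr : Real.exp L = N * r / (n * √n)) (hNL : n * L ≤ N) :
    ENNReal.ofReal (1 - Real.exp (-(5 * n))) ≤
      sphereProduct n N {θ | ∀ ξ : EuclideanSpace ℝ (Fin n), ‖ξ‖ = 1 → ∀ t : ℝ,
        Ffun r t θ ξ ≤ 25 * √(n * L / N) +
          √n / r * gphi ((1 - 4 * √n / r) * √n * t / r)} := by
  have hn' : (5 : ℝ) ≤ n := by exact_mod_cast hn
  have hnN' : (n : ℝ) ≤ N := by exact_mod_cast hnN
  have hr0 : 0 < r := lt_of_lt_of_le (by positivity) hr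
  have hN0 : 0 < N := by lia
  have hδ : Real.exp (-L) ≤ 1 / 2 := by
    rw [Real.exp_neg, ← one_div]
    gcongr
    linarith [Real.add_one_le_exp L]
  obtain ⟨S, hSsphere, hSnet, hScard⟩ := exists_finset_net_of_subset_closedBall
    (Real.exp_pos (-L)) (by linarith)
    (sphere_subset_closedBall (x := (0 : EuclideanSpace ℝ (Fin n))))
  obtain ⟨T, hTnet, hTcard⟩ := exists_finset_net_Icc (R := r + N) (ε := 1 / N) (by positivity)
    (by positivity)
  simp only [mem_sphere_zero_iff_norm, subset_def, Finset.mem_coe] at hSsphere hSnet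
  rw [finrank_euclideanSpace_fin] at hScard
  refine (ofReal_one_sub_exp_le_sphereProduct_typicalSamples hn hr hrn hL hNL hSsphere
    (hScard.trans (three_div_exp_neg_pow_le hL n))
    (hTcard.trans (two_mul_add_div_inv_add_two_le_exp hn' hnN' hr hL hLr))).trans
    (measure_mono fun θ hθ ξ hξ t ↦ ?_)
  have hF := Ffun_le_of_mem_typicalSamples (by lia) hN0 hr0.le (by positivity)
    (fun t ↦ mul_nonneg (by positivity) (gphi_nonneg _))
    (div_mul_gphi_le_add_abs_sub (by linarith) hr) hδ hSnet hTnet hθ hξ t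
  linarith [discretization_error_le hn' hnN' hr0 hL hLr]

lemma ofReal_one_sub_exp_le_sphereProduct_of_one_le [NeZero n] {b : ℝ → ℝ}
    (hb : ∀ t, 1 ≤ b t) :
    ENNReal.ofReal (1 - Real.exp (-(5 * n))) ≤
      sphereProduct n N {θ | ∀ ξ : EuclideanSpace ℝ (Fin n), ‖ξ‖ = 1 → ∀ t : ℝ,
        Ffun r t θ ξ ≤ b t} := by
  have huniv : {θ : Fin N → sphere (0 : EuclideanSpace ℝ (Fin n)) 1 |
      ∀ ξ : EuclideanSpace ℝ (Fin n), ‖ξ‖ = 1 → ∀ t : ℝ, Ffun r t θ ξ ≤ b t} = univ :=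
    eq_univ_of_forall fun _ _ _ t ↦ Ffun_le_one.trans (hb t)
  rw [huniv, measure_univ]
  exact ENNReal.ofReal_le_one.2 (by linarith [Real.exp_pos (-(5 * n : ℝ))])

lemma ofReal_one_sub_exp_le_sphereProduct_log (hnN : n ≤ N) (hr : 4 * √n < r)
    (hrn : r ≤ n * √n) :
    ENNReal.ofReal (1 - Real.exp (-(5 * n))) ≤
      sphereProduct n N {θ | ∀ ξ : EuclideanSpace ℝ (Fin n), ‖ξ‖ = 1 → ∀ t : ℝ,
        Ffun r t θ ξ ≤ 25 * √(n * Real.log (N * r / (n * √n)) / N) +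
          √n / r * gphi ((1 - 4 * √n / r) * √n * t / r)} := by
  have hn4 : (4 : ℝ) < n := lt_of_mul_lt_mul_right (hr.trans_le hrn) (Real.sqrt_nonneg _)
  have hn : 5 ≤ n := by exact_mod_cast hn4
  have : NeZero n := ⟨by lia⟩
  have hnN' : (n : ℝ) ≤ N := by exact_mod_cast hnN
  have hN : 0 < (N : ℝ) := by linarith
  have hr0 : 0 < r := lt_of_le_of_lt (by positivity) hr
  rcases le_or_gt (n * Real.log (N * r / (n * √n))) N with hNL | hNL
  · exact ofReal_one_sub_exp_le_sphereProduct hn hnN hr.le hrn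
      (one_le_log_of_four_mul_sqrt_le (by linarith) hnN' hr.le) (Real.exp_log (by positivity)) hNL
  · refine ofReal_one_sub_exp_le_sphereProduct_of_one_le fun t ↦ ?_
    have hsqrt : 1 ≤ √(n * Real.log (N * r / (n * √n)) / N) :=
      Real.one_le_sqrt.2 ((one_le_div hN).2 hNL.le)
    have hmain : 0 ≤ √n / r * gphi ((1 - 4 * √n / r) * √n * t / r) :=
      mul_nonneg (by positivity) (gphi_nonneg _)
    linarith

end Main

theorem key_estimate_general :
    ∃ C₃ C₄ C₅ : ℝ, 0 < C₃ ∧ 0 < C₄ ∧ 0 < C₅ ∧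
      ∀ n N : ℕ, n ≤ N → ∀ r : ℝ, 0 < r → r ≤ n * √n →
        ∃ q : ℝ, 1 - C₅ * √n / r ≤ q ∧
          ENNReal.ofReal (1 - Real.exp (-(5 * n))) ≤
            sphereProduct n N
              {θ | ∀ ξ : EuclideanSpace ℝ (Fin n), ‖ξ‖ = 1 → ∀ t : ℝ,
                Ffun r t θ ξ ≤
                  C₃ * √(n * Real.log (N * r / (n * √n)) / N) +
                    (1 + C₄ * √n / r) * (√n / r) * gphi (q * √n * t / r)} := by
  refine ⟨25, 12, 4, by norm_num, by norm_num, by norm_num, fun n N hnN r hr hrn ↦ ?_⟩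
  have hn0 : (0 : ℝ) < n := by
    by_contra! h
    nlinarith [Real.sqrt_nonneg n]
  have : NeZero n := ⟨by exact_mod_cast hn0.ne'⟩
  rcases le_or_gt r (4 * √n) with hr4 | hr4
  · refine ⟨0, by rw [sub_nonpos, le_div_iff₀ hr]; linarith,
      ofReal_one_sub_exp_le_sphereProduct_of_one_le fun t ↦ ?_⟩
    simpa [gphi] using one_le_bound_of_le_four_mul_sqrt hr hr4 (by positivity)
  · refine ⟨1 - 4 * √n / r, le_rfl, (ofReal_one_sub_exp_le_sphereProduct_log hnN hr4 hrn).trans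
      (measure_mono fun θ hθ ξ hξ t ↦ (hθ ξ hξ t).trans ?_)⟩
    gcongr
    · exact gphi_nonneg _
    · exact le_mul_of_one_le_left (by positivity) (le_add_of_nonneg_right (by positivity))

/-- the key estimate (Proposition 3.1): with probability at least
`1 − e^{−5n}`, simultaneously for all unit `ξ` and all `t`,
`(1/N)∑ φ(r⟨ξ,θ_k⟩+t) ≤ C₃√(n log(Nr/(n√n))/N) + (1+C₄√n/r)(√n/r)φ(q√n t/r)`. -/
theorem key_estimate :
    ∃ C₁ C₂ C₃ C₄ C₅ : ℝ, 0 < C₁ ∧ 0 < C₂ ∧ 0 < C₃ ∧ 0 < C₄ ∧ 0 < C₅ ∧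
      ∀ n N : ℕ, 5 ≤ n → n ≤ N →
        ∀ r : ℝ, C₂ * Real.sqrt n ≤ r → r ≤ n →
          C₁ * n * Real.log (N * r / (n * Real.sqrt n)) ≤ N → (N : ℝ) ≤ (n : ℝ) ^ 10 →
            ∃ q : ℝ, 1 - C₅ * Real.sqrt n / r ≤ q ∧
              ENNReal.ofReal (1 - Real.exp (-(5 * n))) ≤
                sphereProduct n N
                  {θ | ∀ ξ : EuclideanSpace ℝ (Fin n), ‖ξ‖ = 1 → ∀ t : ℝ,
                    Ffun r t θ ξ ≤
                      C₃ * Real.sqrt (n * Real.log (N * r / (n * Real.sqrt n)) / N) +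
                        (1 + C₄ * Real.sqrt n / r) * (Real.sqrt n / r) *
                          gphi (q * Real.sqrt n * t / r)} := by
  obtain ⟨C₃, C₄, C₅, hC₃, hC₄, hC₅, h⟩ := key_estimate_general
  refine ⟨1, 1, C₃, C₄, C₅, one_pos, one_pos, hC₃, hC₄, hC₅, fun n N hn hnN r hr hrn _ _ ↦
    h n N hnN r (lt_of_lt_of_le (by positivity) hr) (hrn.trans ?_)⟩
  exact le_mul_of_one_le_right (Nat.cast_nonneg n)
    (Real.one_le_sqrt.2 (by exact_mod_cast (by lia : 1 ≤ n)))
end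

section
/- There is a universal constant c > 0 with the following property. Let n ≥ 2 and let v₁, …, v_M ∈ ℝⁿ be vectors with 0 < |v_i| ≤ n for all i. Let K = conv{±v₁, …, ±v_M, ±n e₁, …, ±n e_n}, where e₁, …, e_n is the standard basis of ℝⁿ. Then |4K| ≤ cⁿ · Π_{i=1}^{M} (1 − e^{−25 n²/(2 |v_i|²)})^{−1}. -/
open MeasureTheory Metric Set
open scoped Pointwise

/-!
Let `K ⊆ ℝⁿ` be the absolutely convex hull of vectors `wᵢ` and `R, b > 0`. Write a point of `r • K`
as `∑ xᵢ uᵢ`, where `uᵢ = (R / |wᵢ|²) wᵢ`. Rounding each `xᵢ` at random to one of the two nearest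
integers, with mean `xᵢ`, costs little in the square norm and preserves the mean of `|xᵢ|`; hence
some integer vector `k` satisfies
`|∑ (xᵢ - kᵢ) uᵢ|² + ∑ cᵢ |kᵢ| ≤ ∑ (|uᵢ|² + cᵢ) |xᵢ|`. With `cᵢ = b |uᵢ|²` the right-hand side is
at most `ρ = (1 + b) |r| R` on all of `r • K`, so there the function
`y ↦ e^ρ ∑ₖ e^{-∑ cᵢ |kᵢ|} e^{-|y - ∑ kᵢ uᵢ|²}` is at least `1`. Its integral over the whole space
is `e^ρ π^{n/2}` times a product of geometric series, one for each `i`. For `R = n`, each vector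
`n eⱼ` contributes a factor depending on `b` alone.
-/

section Rounding

variable {E ι : Type*} [NormedAddCommGroup E] [InnerProductSpace ℝ E]

lemma one_sub_fract_mul_abs_floor_add (x : ℝ) :
    (1 - Int.fract x) * |(⌊x⌋ : ℝ)| + Int.fract x * |(⌊x⌋ + 1 : ℝ)| = |x| := by
  have hx := Int.floor_add_fract x
  have hθ := Int.fract_nonneg x
  have hθ' := (Int.fract_lt_one x).le
  rcases lt_or_ge ⌊x⌋ 0 with hk | hk
  · have hk' : (⌊x⌋ : ℝ) + 1 ≤ 0 := by exact_mod_cast hk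
    rw [abs_of_nonpos hk', abs_of_nonpos (by linarith), abs_of_nonpos (by linarith)]
    linarith
  · have hk' : (0 : ℝ) ≤ ⌊x⌋ := by exact_mod_cast hk
    rw [abs_of_nonneg hk', abs_of_nonneg (by linarith), abs_of_nonneg (by linarith)]
    linarith

lemma fract_mul_one_sub_fract_le_abs (x : ℝ) : Int.fract x * (1 - Int.fract x) ≤ |x| := by
  have hx := Int.floor_add_fract x
  have hθ := Int.fract_nonneg x
  have hθ' := (Int.fract_lt_one x).le
  rcases lt_or_ge ⌊x⌋ 0 with hk | hk
  · have hk' : (⌊x⌋ : ℝ) + 1 ≤ 0 := by exact_mod_cast hk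
    nlinarith [neg_le_abs x]
  · have hk' : (0 : ℝ) ≤ ⌊x⌋ := by exact_mod_cast hk
    nlinarith [le_abs_self x]

lemma one_sub_mul_norm_add_smul_sq_add (z u : E) (θ : ℝ) :
    (1 - θ) * ‖z + θ • u‖ ^ 2 + θ * ‖z + (θ - 1) • u‖ ^ 2 =
      ‖z‖ ^ 2 + θ * (1 - θ) * ‖u‖ ^ 2 := by
  simp only [norm_add_sq_real, inner_smul_right, norm_smul, mul_pow, Real.norm_eq_abs, sq_abs]
  ring

lemma exists_int_norm_add_smul_sq_add_le (z u : E) (c x : ℝ) :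
    ∃ k : ℤ, ‖z + (x - k) • u‖ ^ 2 + c * |(k : ℝ)| ≤ ‖z‖ ^ 2 + (‖u‖ ^ 2 + c) * |x| := by
  by_contra! h
  have h_floor := h ⌊x⌋
  have h_floor_add_one := h (⌊x⌋ + 1)
  push_cast at h_floor_add_one
  rw [Int.self_sub_floor] at h_floor
  rw [← sub_sub, Int.self_sub_floor] at h_floor_add_one
  have h_norm := one_sub_mul_norm_add_smul_sq_add z u (Int.fract x)
  have h_abs := congrArg (c * ·) (one_sub_fract_mul_abs_floor_add x)
  have h_var := mul_le_mul_of_nonneg_right (fract_mul_one_sub_fract_le_abs x) (sq_nonneg ‖u‖)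
  -- The mean over the two roundings of `x` contradicts that both of them violate the bound.
  have h_mean := add_lt_add_of_lt_of_le
    (mul_lt_mul_of_pos_left h_floor (sub_pos.2 (Int.fract_lt_one x)))
    (mul_le_mul_of_nonneg_left h_floor_add_one.le (Int.fract_nonneg x))
  linarith

lemma exists_int_norm_add_sum_smul_sq_add_le (u : ι → E) (c x : ι → ℝ) (s : Finset ι) (z : E) :
    ∃ k : ι → ℤ, ‖z + ∑ i ∈ s, (x i - k i) • u i‖ ^ 2 + ∑ i ∈ s, c i * |(k i : ℝ)| ≤
      ‖z‖ ^ 2 + ∑ i ∈ s, (‖u i‖ ^ 2 + c i) * |x i| := by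
  classical
  induction s using Finset.induction_on generalizing z with
  | empty => exact ⟨0, by simp⟩
  | insert a s ha ih =>
    obtain ⟨m, hm⟩ := exists_int_norm_add_smul_sq_add_le z (u a) (c a) (x a)
    obtain ⟨k, hk⟩ := ih (z + (x a - m) • u a)
    have h_update : ∀ i ∈ s, Function.update k a m i = k i := fun i hi =>
      Function.update_of_ne (ne_of_mem_of_not_mem hi ha) _ _
    refine ⟨Function.update k a m, ?_⟩
    simp only [Finset.sum_insert ha, Function.update_self, ← add_assoc z]
    rw [Finset.sum_congr rfl fun i hi => by rw [h_update i hi],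
      Finset.sum_congr (g := fun i => c i * |(k i : ℝ)|) rfl fun i hi => by rw [h_update i hi]]
    linarith

end Rounding

section Series

open scoped ENNReal

lemma tsum_prod_le_prod_tsum {ι : Type*} [Fintype ι] {κ : ι → Type*} (f : ∀ i, κ i → ℝ≥0∞) :
    ∑' k : ∀ i, κ i, ∏ i, f i (k i) ≤ ∏ i, ∑' j, f i j := by
  classical
  rw [ENNReal.tsum_eq_iSup_sum]
  refine iSup_le fun s => ?_
  have hs : s ⊆ Fintype.piFinset fun i => s.image (· i) := fun k hk =>
    Fintype.mem_piFinset.2 fun i => Finset.mem_image_of_mem (· i) hk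
  calc ∑ k ∈ s, ∏ i, f i (k i)
      ≤ ∑ k ∈ Fintype.piFinset fun i => s.image (· i), ∏ i, f i (k i) :=
        Finset.sum_le_sum_of_subset hs
    _ = ∏ i, ∑ j ∈ s.image (· i), f i j := (Finset.prod_univ_sum _ _).symm
    _ ≤ ∏ i, ∑' j, f i j := Finset.prod_le_prod' fun i _ => ENNReal.sum_le_tsum _

lemma tsum_int_pow_two_mul_natAbs_le (p : ℝ≥0∞) :
    ∑' k : ℤ, p ^ (2 * k.natAbs) ≤ (1 - p)⁻¹ := by
  rcases le_total 1 p with hp | hp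
  · simp [tsub_eq_zero_of_le hp]
  -- `Equiv.intEquivNat` sends `m` to `2 * m` and `-(m + 1)` to `2 * m + 1`.
  have h_index (k : ℤ) : Equiv.intEquivNat k ≤ 2 * k.natAbs := by
    rcases k with m | m
    · exact le_rfl
    · change 2 * m + 1 ≤ 2 * (m + 1)
      lia
  calc ∑' k : ℤ, p ^ (2 * k.natAbs)
      ≤ ∑' k : ℤ, p ^ Equiv.intEquivNat k :=
        ENNReal.tsum_le_tsum fun k => pow_le_pow_right_of_le_one' hp (h_index k)
    _ = ∑' m : ℕ, p ^ m := Equiv.intEquivNat.tsum_eq (p ^ ·)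
    _ = (1 - p)⁻¹ := ENNReal.tsum_geometric p

lemma ofReal_exp_neg_sum_mul_abs {ι : Type*} [Fintype ι] (c : ι → ℝ) (k : ι → ℤ) :
    ENNReal.ofReal (Real.exp (-∑ i, c i * |(k i : ℝ)|)) =
      ∏ i, ENNReal.ofReal (Real.exp (-c i / 2)) ^ (2 * (k i).natAbs) := by
  rw [← Finset.sum_neg_distrib, Real.exp_sum,
    ENNReal.ofReal_prod_of_nonneg fun _ _ => (Real.exp_pos _).le]
  refine Finset.prod_congr rfl fun i _ => ?_
  rw [← ENNReal.ofReal_pow (Real.exp_pos _).le, ← Real.exp_nat_mul]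
  congr 2
  push_cast [Nat.cast_natAbs]
  ring

lemma tsum_ofReal_exp_neg_sum_mul_abs_le {ι : Type*} [Fintype ι] (c : ι → ℝ) :
    ∑' k : ι → ℤ, ENNReal.ofReal (Real.exp (-∑ i, c i * |(k i : ℝ)|)) ≤
      ∏ i, (1 - ENNReal.ofReal (Real.exp (-c i / 2)))⁻¹ := by
  simp only [ofReal_exp_neg_sum_mul_abs]
  exact (tsum_prod_le_prod_tsum _).trans
    (Finset.prod_le_prod' fun i _ => tsum_int_pow_two_mul_natAbs_le _)

lemma ofReal_inv_one_sub {p : ℝ} (hp : 0 ≤ p) (hp' : p < 1) :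
    ENNReal.ofReal (1 - p)⁻¹ = (1 - ENNReal.ofReal p)⁻¹ := by
  rw [ENNReal.ofReal_inv_of_pos (sub_pos.2 hp'), ENNReal.ofReal_sub 1 hp, ENNReal.ofReal_one]

end Series

section AbsConvexHull

variable {E ι : Type*} [AddCommGroup E] [Module ℝ E]

lemma exists_sum_abs_le_one_of_mem_absConvexHull_range [Fintype ι] {w : ι → E} {y : E}
    (hy : y ∈ absConvexHull ℝ (range w)) :
    ∃ a : ι → ℝ, ∑ i, |a i| ≤ 1 ∧ ∑ i, a i • w i = y := by
  classical
  refine absConvexHull_min (t := {y | ∃ a : ι → ℝ, ∑ i, |a i| ≤ 1 ∧ ∑ i, a i • w i = y})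
    ?_ ⟨?balanced, ?convex⟩ hy
  · rintro _ ⟨i, rfl⟩
    exact ⟨Pi.single i 1, by simp [Pi.single_apply, apply_ite abs], by simp [Pi.single_apply]⟩
  case balanced =>
    rintro t ht _ ⟨_, ⟨a, ha, rfl⟩, rfl⟩
    refine ⟨t • a, ?_, by simp [Finset.smul_sum, mul_smul]⟩
    simpa [abs_mul, ← Finset.mul_sum] using
      mul_le_one₀ ht (Finset.sum_nonneg fun _ _ => abs_nonneg _) ha
  case convex =>
    rintro _ ⟨a, ha, rfl⟩ _ ⟨a', ha', rfl⟩ s t hs ht hst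
    refine ⟨s • a + t • a', ?_, by
      simp [Finset.smul_sum, add_smul, mul_smul, Finset.sum_add_distrib]⟩
    calc ∑ i, |(s • a + t • a') i|
        ≤ ∑ i, (s * |a i| + t * |a' i|) := Finset.sum_le_sum fun i _ => by
          simpa [abs_mul, abs_of_nonneg hs, abs_of_nonneg ht] using abs_add_le (s * a i) (t * a' i)
      _ = s * ∑ i, |a i| + t * ∑ i, |a' i| := by
          rw [Finset.sum_add_distrib, Finset.mul_sum, Finset.mul_sum]
      _ ≤ 1 := by nlinarith

lemma convexHull_range_union_neg_range_union {κ : Type*} (v : ι → E) (e : κ → E) :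
    convexHull ℝ (range v ∪ -range v ∪ range e ∪ -range e) =
      absConvexHull ℝ (range (Sum.elim v e)) := by
  rw [← convexHull_union_neg_eq_absConvexHull, Sum.elim_range, union_neg]
  congr 1
  ac_rfl

end AbsConvexHull

section Volume

variable {E ι : Type*} [NormedAddCommGroup E] [InnerProductSpace ℝ E] [Fintype ι]

/-- A weighted sum of Gaussians centred at the integer combinations of the vectors `u i`, the weight
decaying at rate `c i` in the `i`-th integer coefficient. It is `ENNReal`-valued, so that no
summability is required. -/
noncomputable def latticeGaussianSum (u : ι → E) (c : ι → ℝ) (y : E) : ENNReal :=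
  ∑' k : ι → ℤ, ENNReal.ofReal (Real.exp (-∑ i, c i * |(k i : ℝ)|)) *
    ENNReal.ofReal (Real.exp (-‖y - ∑ i, (k i : ℝ) • u i‖ ^ 2))

lemma one_le_exp_mul_latticeGaussianSum {u : ι → E} {c x : ι → ℝ} {ρ : ℝ}
    (hx : ∑ i, (‖u i‖ ^ 2 + c i) * |x i| ≤ ρ) :
    1 ≤ ENNReal.ofReal (Real.exp ρ) * latticeGaussianSum u c (∑ i, x i • u i) := by
  obtain ⟨k, hk⟩ := exists_int_norm_add_sum_smul_sq_add_le u c x Finset.univ 0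
  simp only [zero_add, norm_zero, sub_smul, Finset.sum_sub_distrib, ne_eq, OfNat.ofNat_ne_zero,
    not_false_eq_true, zero_pow] at hk
  have h_term : 1 ≤ ENNReal.ofReal (Real.exp ρ) *
      (ENNReal.ofReal (Real.exp (-∑ i, c i * |(k i : ℝ)|)) *
        ENNReal.ofReal (Real.exp (-‖∑ i, x i • u i - ∑ i, (k i : ℝ) • u i‖ ^ 2))) := by
    rw [← ENNReal.ofReal_mul (Real.exp_pos _).le, ← ENNReal.ofReal_mul (Real.exp_pos _).le,
      ← Real.exp_add, ← Real.exp_add, ENNReal.one_le_ofReal]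
    exact Real.one_le_exp (by linarith)
  exact h_term.trans (mul_le_mul_right (ENNReal.le_tsum k) _)

variable [MeasurableSpace E] [BorelSpace E]

lemma measurable_latticeGaussianSum (u : ι → E) (c : ι → ℝ) :
    Measurable (latticeGaussianSum u c) := by
  unfold latticeGaussianSum
  fun_prop

variable [FiniteDimensional ℝ E]

lemma lintegral_ofReal_exp_neg_norm_sub_sq (z : E) :
    ∫⁻ y : E, ENNReal.ofReal (Real.exp (-‖y - z‖ ^ 2)) =
      ENNReal.ofReal (√Real.pi ^ Module.finrank ℝ E) := by
  have h_integral : ∫ y : E, Real.exp (-‖y‖ ^ 2) = √Real.pi ^ Module.finrank ℝ E := by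
    simpa [Real.rpow_div_two_eq_sqrt _ Real.pi_pos.le] using
      GaussianFourier.integral_rexp_neg_mul_sq_norm (V := E) one_pos
  have h_integrable : Integrable fun y : E => Real.exp (-‖y‖ ^ 2) :=
    .of_integral_ne_zero (by rw [h_integral]; positivity)
  rw [lintegral_sub_right_eq_self (fun y : E => ENNReal.ofReal (Real.exp (-‖y‖ ^ 2))) z,
    ← h_integral, ofReal_integral_eq_lintegral_ofReal h_integrable
      (.of_forall fun _ => (Real.exp_pos _).le)]

lemma lintegral_latticeGaussianSum_le (u : ι → E) (c : ι → ℝ) :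
    ∫⁻ y, latticeGaussianSum u c y ≤
      ENNReal.ofReal (√Real.pi ^ Module.finrank ℝ E) *
        ∏ i, (1 - ENNReal.ofReal (Real.exp (-c i / 2)))⁻¹ := by
  unfold latticeGaussianSum
  rw [lintegral_tsum fun k => by fun_prop]
  simp only [lintegral_const_mul' _ _ ENNReal.ofReal_ne_top, lintegral_ofReal_exp_neg_norm_sub_sq]
  rw [ENNReal.tsum_mul_right, mul_comm]
  gcongr
  exact tsum_ofReal_exp_neg_sum_mul_abs_le c

lemma volume_image_linearCombination_le (u : ι → E) (c : ι → ℝ) (ρ : ℝ) :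
    volume (Fintype.linearCombination ℝ u '' {x | ∑ i, (‖u i‖ ^ 2 + c i) * |x i| ≤ ρ}) ≤
      ENNReal.ofReal (Real.exp ρ * √Real.pi ^ Module.finrank ℝ E) *
        ∏ i, (1 - ENNReal.ofReal (Real.exp (-c i / 2)))⁻¹ := by
  have h_meas := measurable_latticeGaussianSum u c
  calc volume (Fintype.linearCombination ℝ u '' {x | ∑ i, (‖u i‖ ^ 2 + c i) * |x i| ≤ ρ})
      ≤ volume {y | 1 ≤ ENNReal.ofReal (Real.exp ρ) * latticeGaussianSum u c y} := by
        refine measure_mono ?_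
        rintro _ ⟨x, hx, rfl⟩
        exact one_le_exp_mul_latticeGaussianSum hx
    _ ≤ ∫⁻ y, ENNReal.ofReal (Real.exp ρ) * latticeGaussianSum u c y := by
        simpa only [one_mul] using mul_meas_ge_le_lintegral (h_meas.const_mul _) 1
    _ = ENNReal.ofReal (Real.exp ρ) * ∫⁻ y, latticeGaussianSum u c y :=
        lintegral_const_mul _ h_meas
    _ ≤ _ := by
        rw [ENNReal.ofReal_mul (Real.exp_pos _).le, mul_assoc]
        exact mul_le_mul_right (lintegral_latticeGaussianSum_le u c) _

lemma volume_smul_absConvexHull_range_le {w : ι → E} (hw : ∀ i, w i ≠ 0) {R b : ℝ} (hR : 0 < R)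
    (hb : 0 ≤ b) (r : ℝ) :
    volume (r • absConvexHull ℝ (range w)) ≤
      ENNReal.ofReal (Real.exp ((1 + b) * |r| * R) * √Real.pi ^ Module.finrank ℝ E) *
        ∏ i, (1 - ENNReal.ofReal (Real.exp (-(b * R ^ 2) / (2 * ‖w i‖ ^ 2))))⁻¹ := by
  let u (i : ι) : E := (R / ‖w i‖ ^ 2) • w i
  have hw' (i) : ‖w i‖ ≠ 0 := norm_ne_zero_iff.2 (hw i)
  have hu (i) : ‖u i‖ ^ 2 = R ^ 2 / ‖w i‖ ^ 2 := by
    have := hw' i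
    simp only [u, norm_smul, norm_div, norm_pow, Real.norm_eq_abs, mul_pow, div_pow, sq_abs]
    field_simp
  have h_subset : r • absConvexHull ℝ (range w) ⊆ Fintype.linearCombination ℝ u ''
      {x | ∑ i, (‖u i‖ ^ 2 + b * ‖u i‖ ^ 2) * |x i| ≤ (1 + b) * |r| * R} := by
    rintro _ ⟨y, hy, rfl⟩
    obtain ⟨a, ha, rfl⟩ := exists_sum_abs_le_one_of_mem_absConvexHull_range hy
    refine ⟨fun i => r * a i * ‖w i‖ ^ 2 / R, ?_, ?_⟩
    · have h_coeff (i) : (‖u i‖ ^ 2 + b * ‖u i‖ ^ 2) * |r * a i * ‖w i‖ ^ 2 / R| =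
          (1 + b) * |r| * R * |a i| := by
        have := hw' i
        rw [hu, abs_div, abs_mul, abs_mul, abs_of_pos hR, abs_of_nonneg (sq_nonneg ‖w i‖)]
        field_simp
      simp only [mem_ofPred_eq, h_coeff, ← Finset.mul_sum]
      exact mul_le_of_le_one_right (by positivity) ha
    · simp only [Fintype.linearCombination_apply, u, smul_smul, Finset.smul_sum]
      refine Finset.sum_congr rfl fun i _ => ?_
      have := hw' i
      congr 1
      field_simp
  refine (measure_mono h_subset).trans
    ((volume_image_linearCombination_le u (fun i => b * ‖u i‖ ^ 2) _).trans_eq ?_)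
  congr! 6 with i
  rw [hu]
  ring_nf

end Volume

theorem volume_conv_hull_bound_general {E ι : Type*} [NormedAddCommGroup E]
    [InnerProductSpace ℝ E] [FiniteDimensional ℝ E] [MeasurableSpace E] [BorelSpace E] [Fintype ι]
    {n : ℕ} (e : OrthonormalBasis (Fin n) ℝ E) {v : ι → E} (hv : ∀ i, v i ≠ 0) {b : ℝ} (hb : 0 < b)
    (r : ℝ) :
    volume (r • convexHull ℝ (range v ∪ -range v ∪
        range (fun j => (n : ℝ) • e j) ∪ -range (fun j => (n : ℝ) • e j))) ≤
      ENNReal.ofReal ((Real.exp ((1 + b) * |r|) * √Real.pi * (1 - Real.exp (-b / 2))⁻¹) ^ n *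
        ∏ i, (1 - Real.exp (-(b * n ^ 2) / (2 * ‖v i‖ ^ 2)))⁻¹) := by
  rcases n.eq_zero_or_pos with rfl | hn
  · have : Subsingleton E := e.repr.toEquiv.subsingleton
    have : IsEmpty ι := ⟨fun i => hv i (Subsingleton.elim _ _)⟩
    simp only [range_eq_empty, neg_empty, union_empty, convexHull_empty, smul_set_empty,
      measure_empty, zero_le]
  have hn' : (0 : ℝ) < n := Nat.cast_pos.2 hn
  have h_norm (j) : ‖(n : ℝ) • e j‖ = n := by simp [norm_smul]
  have h_ne : ∀ i, Sum.elim v (fun j => (n : ℝ) • e j) i ≠ 0 :=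
    Sum.rec hv fun j => norm_ne_zero_iff.1 ((h_norm j).trans_ne hn'.ne')
  have h_exp_lt {x : E} (hx : x ≠ 0) : Real.exp (-(b * n ^ 2) / (2 * ‖x‖ ^ 2)) < 1 :=
    Real.exp_lt_one_iff.2 (div_neg_of_neg_of_pos (neg_neg_of_pos (by positivity)) (by positivity))
  have h_inv_nonneg {x : E} (hx : x ≠ 0) :
      0 ≤ (1 - Real.exp (-(b * n ^ 2) / (2 * ‖x‖ ^ 2)))⁻¹ :=
    inv_nonneg.2 (sub_nonneg.2 (h_exp_lt hx).le)
  have h_exp_basis : -(b * (n : ℝ) ^ 2) / (2 * (n : ℝ) ^ 2) = -b / 2 := by field_simp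
  rw [convexHull_range_union_neg_range_union]
  refine (volume_smul_absConvexHull_range_le h_ne hn' hb.le r).trans_eq ?_
  simp only [← ofReal_inv_one_sub (Real.exp_pos _).le (h_exp_lt (h_ne _))]
  rw [← ENNReal.ofReal_prod_of_nonneg fun i _ => h_inv_nonneg (h_ne i),
    ← ENNReal.ofReal_mul (by positivity), Fintype.prod_sum_type]
  simp only [Sum.elim_inl, Sum.elim_inr, h_norm, h_exp_basis, Finset.prod_const, Finset.card_univ,
    Fintype.card_fin, Module.finrank_eq_card_basis e.toBasis, mul_pow, ← Real.exp_nat_mul]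
  ring_nf

/-- volume bound for the body
`K = conv{±v₁,…,±v_M, ±n e₁,…,±n e_n}` with `0 < |vᵢ| ≤ n`:
`|4K| ≤ cⁿ ∏ᵢ (1 − e^{−25n²/(2|vᵢ|²)})⁻¹`. -/
theorem volume_conv_hull_bound :
    ∃ c : ℝ, 0 < c ∧ ∀ n : ℕ, 2 ≤ n → ∀ M : ℕ,
      ∀ v : Fin M → EuclideanSpace ℝ (Fin n),
        (∀ i, v i ≠ 0) → (∀ i, ‖v i‖ ≤ n) →
        volume ((4 : ℝ) •
            convexHull ℝ
              (Set.range v ∪ (-Set.range v) ∪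
                Set.range (fun j : Fin n => (n : ℝ) • EuclideanSpace.single j (1 : ℝ)) ∪
                (-Set.range (fun j : Fin n =>
                  (n : ℝ) • EuclideanSpace.single j (1 : ℝ))))) ≤
          ENNReal.ofReal (c ^ n *
            ∏ i : Fin M, (1 - Real.exp (-(25 * n ^ 2) / (2 * ‖v i‖ ^ 2)))⁻¹) := by
  have h_exp : Real.exp (-25 / 2) < 1 := Real.exp_lt_one_iff.2 (by norm_num)
  refine ⟨Real.exp ((1 + 25) * |4|) * √Real.pi * (1 - Real.exp (-25 / 2))⁻¹,
    mul_pos (by positivity) (inv_pos.2 (sub_pos.2 h_exp)), fun n _ M v hv _ => ?_⟩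
  simpa only [EuclideanSpace.basisFun_apply] using
    volume_conv_hull_bound_general (EuclideanSpace.basisFun (Fin n) ℝ) hv (by norm_num) 4
end
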